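/- arXiv:1111.3107 — 9 statements merged into one kernel-verified Lean document; each statement's English description precedes it below -/
import Mathlib

section
/- If U ⊆ List A is recognizable over A by a set-labeled automaton, then the ω-iteration U^ω ⊆ (ℕ → A) is Büchi-recognizable over A. -/
/-!
Let `M` recognize `U`. The Büchi automaton `M.loop` adds to `M` one fresh state `none`, which
is its initial state and its only accepting state. The fresh state may stand in for `M.q0` as the
source of a transition, and for any accepting state of `M` as the target. So being in `none` means
that a nonempty word of `U` has just been completed and the next one is about to start.

A successful run of `M.loop` visits `none` infinitely often, and between two consecutive visits it
spells an accepting run of `M`: the cut points of the factorization are the visits, enumerated by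
`Nat.nth`. Conversely, accepting runs of `M` on the factors of `α` are glued to a run of `M.loop`
that is in `none` exactly at the cut points. Since `none` is distinct from all states of `M`,
returning to `M.q0` or passing through an accepting state inside a factor causes no confusion.
-/

universe u

/-- A set-labeled automaton over a (possibly infinite) alphabet `A`:
finitely many states, an initial state, a finite list of transitions
labeled by sets of letters, and a set of accepting states. -/
structure SLA (A : Type u) where
  Q : Type
  fin : Finite Q
  q0 : Q
  Δ : List (Q × Set A × Q)
  F : Set Q

namespace SLA

variable {A : Type u}

/-- `ρ` respects the transitions of `M` along the finite word `u`. -/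
def FinRunOn (M : SLA A) (u : List A) (ρ : ℕ → M.Q) : Prop :=
  ∀ i, (h : i < u.length) → ∃ φ, (ρ i, φ, ρ (i + 1)) ∈ M.Δ ∧ u.get ⟨i, h⟩ ∈ φ

/-- There is a run of `M` from `p` to `q` on the finite word `u`. -/
def FinRun (M : SLA A) (p q : M.Q) (u : List A) : Prop :=
  ∃ ρ : ℕ → M.Q, ρ 0 = p ∧ ρ u.length = q ∧ M.FinRunOn u ρ

/-- There is a run of `M` from `p` to `q` on `u` that visits an accepting state. -/
def FinRunVisit (M : SLA A) (p q : M.Q) (u : List A) : Prop :=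
  ∃ ρ : ℕ → M.Q, ρ 0 = p ∧ ρ u.length = q ∧ (∃ i, i ≤ u.length ∧ ρ i ∈ M.F) ∧
    M.FinRunOn u ρ

/-- The language of finite words accepted by `M`. -/
def lang (M : SLA A) : Set (List A) := {u | ∃ q ∈ M.F, M.FinRun M.q0 q u}

/-- A run of `M` (viewed as a Büchi automaton) on the ω-word `α`. -/
def InfRun (M : SLA A) (α : ℕ → A) (ρ : ℕ → M.Q) : Prop :=
  ρ 0 = M.q0 ∧ ∀ i, ∃ φ, (ρ i, φ, ρ (i + 1)) ∈ M.Δ ∧ α i ∈ φ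

/-- The ω-language accepted by `M` with the Büchi condition. -/
def buchiLang (M : SLA A) : Set (ℕ → A) :=
  {α | ∃ ρ, M.InfRun α ρ ∧ ∀ n, ∃ m, n ≤ m ∧ ρ m ∈ M.F}

/-- The transition profile of a finite word `u`. -/
def tp (M : SLA A) (u : List A) : Set (M.Q × M.Q) × Set (M.Q × M.Q) :=
  ({pq | M.FinRun pq.1 pq.2 u}, {pq | M.FinRunVisit pq.1 pq.2 u})

end SLA

/-- A language of finite words is recognizable over `A` by a set-labeled automaton. -/
def Recognizable (A : Type u) (U : Set (List A)) : Prop :=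
  ∃ M : SLA A, M.lang = U

/-- An ω-language is Büchi-recognizable over `A` by a set-labeled Büchi automaton. -/
def BuchiRecognizable (A : Type u) (L : Set (ℕ → A)) : Prop :=
  ∃ M : SLA A, M.buchiLang = L

/-- The finite word `α(i) α(i+1) ⋯ α(j−1)` (segment with exclusive right end). -/
def extract {A : Type u} (α : ℕ → A) (i j : ℕ) : List A :=
  (List.range (j - i)).map fun k => α (i + k)

/-- ω-iteration `U^ω` of a language `U` of finite words. -/
def omegaIter {A : Type u} (U : Set (List A)) : Set (ℕ → A) :=
  {α | ∃ ι : ℕ → ℕ, ι 0 = 0 ∧ StrictMono ι ∧ ∀ j, extract α (ι j) (ι (j + 1)) ∈ U}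

/-- Concatenation `U · K` of a language of finite words with an ω-language. -/
def cat {A : Type u} (U : Set (List A)) (K : Set (ℕ → A)) : Set (ℕ → A) :=
  {α | ∃ r, extract α 0 r ∈ U ∧ (fun n => α (n + r)) ∈ K}

namespace SLA

variable {A : Type u}

open Classical in
/-- The Büchi automaton for the ω-iteration of `M.lang`: the states of `M` together with a fresh
state `none`, initial and accepting, that can replace `M.q0` as a source and any accepting state
of `M` as a target. -/
noncomputable def loop (M : SLA A) : SLA A where
  Q := Option M.Q
  fin := by
    have := M.fin
    infer_instance
  q0 := none
  Δ := M.Δ.flatMap fun t =>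
    (some t.1 :: if t.1 = M.q0 then [none] else []).flatMap fun a =>
      (some t.2.2 :: if t.2.2 ∈ M.F then [none] else []).map fun b => (a, t.2.1, b)
  F := {none}

theorem mem_loop (M : SLA A) (a b : Option M.Q) (φ : Set A) :
    (a, φ, b) ∈ M.loop.Δ ↔ ∃ p q, (p, φ, q) ∈ M.Δ ∧ (a = some p ∨ a = none ∧ p = M.q0) ∧
      (b = some q ∨ b = none ∧ q ∈ M.F) := by
  classical
  have key : ∀ {X : Type} (x y : Option X) (c : Prop) [Decidable c],
      x ∈ (y :: if c then [none] else []) ↔ (x = y ∨ x = none ∧ c) := by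
    intro X x y c _
    split_ifs with h <;> simp [h]
  change (a, φ, b) ∈ (M.Δ.flatMap fun t =>
    (some t.1 :: if t.1 = M.q0 then [none] else []).flatMap fun a =>
      (some t.2.2 :: if t.2.2 ∈ M.F then [none] else []).map fun b => (a, t.2.1, b) :
    List (Option M.Q × Set A × Option M.Q)) ↔ _
  simp only [List.mem_flatMap, List.mem_map, key, Prod.mk.injEq]
  constructor
  · rintro ⟨⟨p, ψ, q⟩, hm, a', ha, b', hb, rfl, rfl, rfl⟩
    exact ⟨p, q, hm, ha, hb⟩
  · rintro ⟨p, q, hm, ha, hb⟩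
    exact ⟨(p, φ, q), hm, a, ha, b, hb, rfl, rfl, rfl⟩

/-- Acceptance of a factor of an ω-word, with letters and positions read off the ω-word. -/
theorem extract_mem_lang (M : SLA A) (α : ℕ → A) (i j : ℕ) :
    extract α i j ∈ M.lang ↔ ∃ ρ : ℕ → M.Q, ρ 0 = M.q0 ∧ ρ (j - i) ∈ M.F ∧
      ∀ k < j - i, ∃ φ, (ρ k, φ, ρ (k + 1)) ∈ M.Δ ∧ α (i + k) ∈ φ := by
  simp only [lang, FinRun, FinRunOn, extract, Set.mem_ofPred_eq, List.length_map,
    List.length_range, List.get_eq_getElem, List.getElem_map, List.getElem_range]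
  constructor
  · rintro ⟨q, hq, ρ, h0, rfl, h⟩
    exact ⟨ρ, h0, hq, h⟩
  · rintro ⟨ρ, h0, hq, h⟩
    exact ⟨_, hq, ρ, h0, rfl, h⟩

theorem buchiLang_loop_subset (M : SLA A) : M.loop.buchiLang ⊆ omegaIter M.lang := by
  rintro α ⟨(ρ : ℕ → Option M.Q), ⟨h0, hstep⟩, hinf⟩
  replace h0 : ρ 0 = none := h0
  replace hinf : ∀ n, ∃ m, n ≤ m ∧ ρ m = none := hinf
  choose φ hφ hα using hstep
  replace hφ := fun i => (M.mem_loop _ _ _).1 (hφ i)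
  choose p q hpq hp hq using hφ
  have hI : {n | ρ n = none}.Infinite := by
    rw [Set.infinite_iff_exists_gt]
    intro n
    obtain ⟨m, hm, h⟩ := hinf (n + 1)
    exact ⟨m, h, hm⟩
  have hmono := Nat.nth_strictMono hI
  refine ⟨Nat.nth fun n => ρ n = none, Nat.nth_zero_of_zero h0, hmono, fun j => ?_⟩
  have hlt := hmono (Nat.lt_succ_self j)
  have hs : ρ (Nat.nth (fun n => ρ n = none) j) = none := Nat.nth_mem_of_infinite hI j
  have ht : ρ (Nat.nth (fun n => ρ n = none) (j + 1)) = none := Nat.nth_mem_of_infinite hI (j + 1)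
  have hbetween : ∀ n, Nat.nth (fun n => ρ n = none) j < n →
      n < Nat.nth (fun n => ρ n = none) (j + 1) → ρ n ≠ none := by
    intro n h1 h2 hn
    exact absurd (Nat.le_nth_of_lt_nth_succ h2 hn) (not_le.2 h1)
  rw [Nat.succ_eq_add_one] at hlt
  generalize Nat.nth (fun n => ρ n = none) j = s at *
  generalize Nat.nth (fun n => ρ n = none) (j + 1) = t at *
  rw [extract_mem_lang]
  -- The run is read off the targets `q` of the underlying transitions of `M`.
  refine ⟨fun k => if k = 0 then M.q0 else q (s + k - 1), by simp, ?_, fun k hk => ?_⟩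
  · have h1 : t - s ≠ 0 := by omega
    have h2 : s + (t - s) - 1 + 1 = t := by omega
    have h3 := hq (s + (t - s) - 1)
    rw [h2, ht] at h3
    simpa [h1] using h3
  · refine ⟨φ (s + k), ?_, hα _⟩
    have hpk : (if k = 0 then M.q0 else q (s + k - 1)) = p (s + k) := by
      have h3 := hp (s + k)
      split_ifs with h
      · subst h
        rw [Nat.add_zero, hs] at h3
        simpa [eq_comm] using h3
      · have h4 := hq (s + k - 1)
        rw [show s + k - 1 + 1 = s + k by omega] at h4
        have h5 := hbetween (s + k) (by omega) (by omega)
        simp only [h5, false_and, or_false] at h3 h4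
        exact Option.some.inj (h4.symm.trans h3)
    simp only [hpk]
    simpa using hpq (s + k)

theorem omegaIter_subset_buchiLang_loop (M : SLA A) : omegaIter M.lang ⊆ M.loop.buchiLang := by
  classical
  rintro α ⟨ι, h0, hmono, hU⟩
  simp only [extract_mem_lang] at hU
  choose σ hσ0 hσF hσ using hU
  -- `J n` is the index of the factor containing position `n`.
  have hJ : ∀ n, ∃ j, ι j ≤ n ∧ n < ι (j + 1) := by
    intro n
    induction n with
    | zero => exact ⟨0, h0.le, h0.symm.le.trans_lt (hmono Nat.zero_lt_one)⟩
    | succ n ih =>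
      obtain ⟨j, h1, h2⟩ := ih
      by_cases h : n + 1 < ι (j + 1)
      · exact ⟨j, by omega, h⟩
      · exact ⟨j + 1, by omega, by have := hmono (Nat.lt_add_one (j + 1)); omega⟩
  choose J hJ1 hJ2 using hJ
  have huniq : ∀ n j, ι j ≤ n → n < ι (j + 1) → J n = j := by
    intro n j h1 h2
    have h3 := hmono.lt_iff_lt.1 ((hJ1 n).trans_lt h2)
    have h4 := hmono.lt_iff_lt.1 (h1.trans_lt (hJ2 n))
    omega
  have hJι : ∀ j, J (ι j) = j := fun j => huniq _ _ le_rfl (hmono (Nat.lt_succ_self j))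
  let ρ : ℕ → Option M.Q := fun n => if n = ι (J n) then none else some (σ (J n) (n - ι (J n)))
  have hρ : ∀ j, ρ (ι j) = none := fun j => by simp [ρ, hJι]
  refine ⟨ρ, ⟨?_, fun n => ?_⟩, fun n => ⟨ι n, hmono.le_apply, hρ n⟩⟩
  · exact h0 ▸ hρ 0
  · have h1 := hJ1 n
    have h2 := hJ2 n
    obtain ⟨φ, hφ, hα⟩ := hσ (J n) (n - ι (J n)) (by omega)
    rw [Nat.add_sub_cancel' h1] at hα
    refine ⟨φ, (M.mem_loop _ _ _).2 ⟨_, _, hφ, ?_, ?_⟩, hα⟩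
    · by_cases h : n = ι (J n)
      · refine Or.inr ⟨if_pos h, ?_⟩
        rw [← h, Nat.sub_self, hσ0]
      · exact Or.inl (if_neg h)
    · by_cases h : n + 1 = ι (J n + 1)
      · refine Or.inr ⟨h ▸ hρ _, ?_⟩
        rw [show n - ι (J n) + 1 = ι (J n + 1) - ι (J n) by omega]
        exact hσF _
      · have h3 : J (n + 1) = J n := huniq _ _ (by omega) (by omega)
        left
        simp only [ρ, h3]
        rw [if_neg (by omega), show n + 1 - ι (J n) = n - ι (J n) + 1 by omega]

end SLA

/-- the ω-iteration `U^ω` of a recognizable language of finite words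
is Büchi-recognizable. -/
theorem buchiRecognizable_omegaIter {A : Type u} (U : Set (List A))
    (h : Recognizable A U) :
    BuchiRecognizable A (omegaIter U) := by
  obtain ⟨M, rfl⟩ := h
  exact ⟨M.loop, M.buchiLang_loop_subset.antisymm M.omegaIter_subset_buchiLang_loop⟩
end

section
/- If U ⊆ List A is recognizable over A by a set-labeled automaton and K ⊆ (ℕ → A) is Büchi-recognizable over A, then the concatenation U · K ⊆ (ℕ → A) is Büchi-recognizable over A. -/
/-!
Let `M` recognize `U` and let `N` Büchi-recognize `K`. The automaton `SLA.catAut M N` on the disjoint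
union of the state sets runs `M` first. From any accepting state of `M` it may leave the copy of
`M` for good by imitating a transition of `N` out of the initial state of `N`; only the accepting
states of `N` stay accepting. As the switch consumes the first letter read by `N`, no `ε`-transitions
are needed, and the case of an empty prefix (the initial state of `M` accepting) is covered too.

A successful run must enter the copy of `N`, cannot leave it again, and therefore splits at the
switching position `r` into an accepting run of `M` on the first `r` letters and a successful run of
`N` on the rest; conversely such a pair of runs is glued at position `r`.
-/

universe u

namespace SLA

variable {A : Type u}

/-- `M` has a transition from `p` to `q` whose label contains the letter `a`. -/
def Step (M : SLA A) (p : M.Q) (a : A) (q : M.Q) : Prop :=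
  ∃ φ, (p, φ, q) ∈ M.Δ ∧ a ∈ φ

open Classical in
/-- The transitions of the concatenation automaton: those of `M`, those of `N`, and a transition
from every accepting state of `M` to the target of every transition of `N` that leaves `N.q0`,
under the same label. -/
noncomputable def catΔ (M N : SLA A) : List ((M.Q ⊕ N.Q) × Set A × (M.Q ⊕ N.Q)) :=
  haveI := M.fin
  haveI := Fintype.ofFinite M.Q
  M.Δ.map (fun t => (Sum.inl t.1, t.2.1, Sum.inl t.2.2)) ++
    N.Δ.map (fun t => (Sum.inr t.1, t.2.1, Sum.inr t.2.2)) ++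
    (Finset.univ.filter (· ∈ M.F)).toList.flatMap (fun p =>
      (N.Δ.filter (fun t => t.1 = N.q0)).map (fun t => (Sum.inl p, t.2.1, Sum.inr t.2.2)))

/-- The concatenation automaton on the disjoint union of the states of `M` and `N`, started in `M`
and accepting in `N`. -/
noncomputable def catAut (M N : SLA A) : SLA A where
  Q := M.Q ⊕ N.Q
  fin :=
    haveI := M.fin
    haveI := N.fin
    inferInstance
  q0 := Sum.inl M.q0
  Δ := catΔ M N
  F := Set.image Sum.inr N.F

variable {M N : SLA A} {a : A}

lemma catAut_step {x y : M.Q ⊕ N.Q} :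
    (catAut M N).Step x a y ↔ ∃ φ, (x, φ, y) ∈ catΔ M N ∧ a ∈ φ := Iff.rfl

lemma catAut_step_inl_inl {p q : M.Q} :
    (catAut M N).Step (Sum.inl p) a (Sum.inl q) ↔ M.Step p a q := by
  rw [catAut_step]
  simp [Step, catΔ]

lemma catAut_step_inr_inr {p q : N.Q} :
    (catAut M N).Step (Sum.inr p) a (Sum.inr q) ↔ N.Step p a q := by
  rw [catAut_step]
  simp [Step, catΔ]

lemma catAut_step_inl_inr {p : M.Q} {q : N.Q} :
    (catAut M N).Step (Sum.inl p) a (Sum.inr q) ↔ p ∈ M.F ∧ N.Step N.q0 a q := by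
  rw [catAut_step]
  simp [Step, catΔ, and_assoc]

lemma catAut_step_inr_inl {p : N.Q} {q : M.Q} :
    ¬ (catAut M N).Step (Sum.inr p) a (Sum.inl q) := by
  rw [catAut_step]
  simp [catΔ]

lemma extract_zero_mem_lang {α : ℕ → A} {r : ℕ} :
    extract α 0 r ∈ M.lang ↔
      ∃ ρ : ℕ → M.Q, ρ 0 = M.q0 ∧ ρ r ∈ M.F ∧ ∀ i < r, M.Step (ρ i) (α i) (ρ (i + 1)) := by
  simp only [lang, FinRun, FinRunOn, Step, extract, Set.mem_ofPred_eq, List.length_map,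
    List.length_range, List.get_eq_getElem, List.getElem_map, List.getElem_range, zero_add,
    Nat.sub_zero]
  constructor
  · rintro ⟨q, hq, ρ, h0, hr, h⟩
    exact ⟨ρ, h0, hr ▸ hq, h⟩
  · rintro ⟨ρ, h0, hr, h⟩
    exact ⟨_, hr, ρ, h0, rfl, h⟩

/-- Gluing: a run of `M` on a prefix followed by a run of `N` gives a run of `catAut M N`. At the
switching position `r` the glued run is still in the state of `M`. -/
lemma cat_subset_buchiLang_catAut :
    cat M.lang N.buchiLang ⊆ (catAut M N).buchiLang := by
  rintro α ⟨r, hr, σ, ⟨hσ0, hσ⟩, hinf⟩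
  obtain ⟨ρ, hρ0, hρr, hρ⟩ := extract_zero_mem_lang.1 hr
  let τ : ℕ → M.Q ⊕ N.Q := fun i => if i ≤ r then Sum.inl (ρ i) else Sum.inr (σ (i - r))
  have hle {i} (h : i ≤ r) : τ i = Sum.inl (ρ i) := if_pos h
  have hgt {i} (h : r < i) : τ i = Sum.inr (σ (i - r)) := if_neg (not_le.2 h)
  have hstep (i : ℕ) : (catAut M N).Step (τ i) (α i) (τ (i + 1)) := by
    rcases lt_trichotomy i r with h | rfl | h
    · rw [hle h.le, hle h]
      exact catAut_step_inl_inl.2 (hρ i h)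
    · rw [hle le_rfl, hgt i.lt_succ_self]
      refine catAut_step_inl_inr.2 ⟨hρr, ?_⟩
      simpa [hσ0, Step] using hσ 0
    · obtain ⟨j, rfl⟩ := Nat.exists_eq_add_of_le' h.le
      rw [hgt h, hgt (by omega), show j + r + 1 - r = j + 1 by omega, Nat.add_sub_cancel]
      exact catAut_step_inr_inr.2 (hσ j)
  refine ⟨τ, ⟨(hle r.zero_le).trans (congrArg Sum.inl hρ0), hstep⟩, fun n => ?_⟩
  obtain ⟨m, hm, hF⟩ := hinf (n + 1)
  refine ⟨m + r, by omega, ?_⟩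
  rw [hgt (by omega), Nat.add_sub_cancel]
  exact ⟨_, hF, rfl⟩

/-- Splitting: a successful run of `catAut M N` is cut at its last position in `M`. -/
lemma buchiLang_catAut_subset_cat :
    (catAut M N).buchiLang ⊆ cat M.lang N.buchiLang := by
  rintro α ⟨τ, ⟨hτ0, hτ⟩, hinf⟩
  change ∀ i, (catAut M N).Step (τ i) (α i) (τ (i + 1)) at hτ
  have hex : ∃ k, ∃ q : N.Q, τ k = Sum.inr q := by
    obtain ⟨m, -, q, -, hq⟩ := hinf 0
    exact ⟨m, q, hq.symm⟩
  classical
  obtain ⟨r, hr⟩ : ∃ r, Nat.find hex = r + 1 := by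
    refine Nat.exists_eq_succ_of_ne_zero fun h => ?_
    obtain ⟨q, hq⟩ := Nat.find_spec hex
    rw [h, hτ0] at hq
    exact Sum.inl_ne_inr hq
  have hL : ∀ i, ∃ p : M.Q, i ≤ r → τ i = Sum.inl p := by
    intro i
    rcases h : τ i with p | q
    · exact ⟨p, fun _ => rfl⟩
    · exact ⟨M.q0, fun hi => absurd ⟨q, h⟩ (Nat.find_min hex (by omega))⟩
  -- The copy of `N` is never left.
  have hR : ∀ j, ∃ q : N.Q, τ (j + 1 + r) = Sum.inr q := by
    intro j
    induction j with
    | zero => simpa [hr, add_comm] using Nat.find_spec hex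
    | succ j ih =>
      obtain ⟨q, hq⟩ := ih
      have hs := hτ (j + 1 + r)
      rw [show j + 1 + 1 + r = j + 1 + r + 1 by omega]
      rcases h : τ (j + 1 + r + 1) with p | q₂
      · rw [hq, h] at hs
        exact absurd hs catAut_step_inr_inl
      · exact ⟨q₂, rfl⟩
  choose ρ hρ using hL
  choose σ hσ using hR
  have hsw : ρ r ∈ M.F ∧ N.Step N.q0 (α r) (σ 0) := by
    have hs := hτ r
    rw [hρ r le_rfl, show r + 1 = 0 + 1 + r by omega, hσ] at hs
    exact catAut_step_inl_inr.1 hs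
  refine ⟨r, extract_zero_mem_lang.2 ⟨ρ, ?_, hsw.1, fun i hi => ?_⟩,
    fun i => Nat.casesOn i N.q0 σ, ⟨rfl, fun i => ?_⟩, fun n => ?_⟩
  · exact Sum.inl_injective ((hρ 0 r.zero_le).symm.trans hτ0)
  · have hs := hτ i
    rw [hρ i hi.le, hρ (i + 1) hi] at hs
    exact catAut_step_inl_inl.1 hs
  · cases i with
    | zero => simpa [Step] using hsw.2
    | succ j =>
      have hs := hτ (j + 1 + r)
      rw [hσ, show j + 1 + r + 1 = (j + 1) + 1 + r by omega, hσ] at hs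
      exact catAut_step_inr_inr.1 hs
  · obtain ⟨m, hm, q, hqF, hq⟩ := hinf (n + 1 + r)
    obtain ⟨j, rfl⟩ : ∃ j, m = j + 1 + r := ⟨m - r - 1, by omega⟩
    refine ⟨j + 1, by omega, ?_⟩
    have : q = σ j := Sum.inr_injective (hq.trans (hσ j))
    change σ j ∈ N.F
    exact this ▸ hqF

end SLA

/-- the concatenation `U · K` of a recognizable language of finite words
with a Büchi-recognizable ω-language is Büchi-recognizable. -/
theorem buchiRecognizable_cat {A : Type u} (U : Set (List A)) (K : Set (ℕ → A))
    (hU : Recognizable A U) (hK : BuchiRecognizable A K) :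
    BuchiRecognizable A (cat U K) := by
  obtain ⟨M, rfl⟩ := hU
  obtain ⟨N, rfl⟩ := hK
  exact ⟨SLA.catAut M N,
    SLA.buchiLang_catAut_subset_cat.antisymm SLA.cat_subset_buchiLang_catAut⟩
end

section
/- Let ℬ = (Q, q₀, Δ, F) be a set-labeled Büchi automaton over A, and define the relation R on Q by R p q ⟺ there exists φ with (p, φ, q) ∈ Δ and φ nonempty (a 'useful' transition). Then L(ℬ) is nonempty if and only if there exists q ∈ F with Relation.ReflTransGen R q₀ q and Relation.TransGen R q q. -/
/-!
Along a successful run every step is a useful transition, and since `Q` is finite the infinitely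
many visits to `F` hit some accepting state at two different times; the segment between them is the
required cycle, and the segment before them shows that it is reachable.

Conversely, a path to `q` and a nontrivial cycle at `q` form a lasso. Repeating the cycle gives an
infinite path of useful transitions which visits `q` infinitely often
(`exists_seq_of_transGen_self`), and prepending the path to `q` preserves this
(`exists_seq_of_reflTransGen`). Choosing a letter in each nonempty label along the resulting path
gives an accepted ω-word.
-/

universe u

section Paths

variable {Q : Type*} {R : Q → Q → Prop}

/-- `ReflTransGen` is witnessed by a finite path; the values of `c` beyond `n` are
irrelevant. -/
lemma exists_path_of_reflTransGen {p q : Q} (h : Relation.ReflTransGen R p q) :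
    ∃ (n : ℕ) (c : ℕ → Q), c 0 = p ∧ c n = q ∧ ∀ i < n, R (c i) (c (i + 1)) := by
  induction h using Relation.ReflTransGen.head_induction_on with
  | refl => exact ⟨0, fun _ => q, rfl, rfl, by simp⟩
  | @head a b hab _ ih =>
    obtain ⟨n, c, h0, hn, hc⟩ := ih
    refine ⟨n + 1, fun k => Nat.casesOn k a c, rfl, hn, ?_⟩
    rintro (_ | i) hi
    · simpa [h0] using hab
    · exact hc i (by omega)

/-- A nontrivial cycle at `q` unrolls to an infinite path that returns to `q` infinitely often. -/
lemma exists_seq_of_transGen_self {q : Q} (h : Relation.TransGen R q q) :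
    ∃ s : ℕ → Q, s 0 = q ∧ (∀ i, R (s i) (s (i + 1))) ∧ ∀ n, ∃ m, n ≤ m ∧ s m = q := by
  obtain ⟨b, hb, hbq⟩ := Relation.TransGen.head'_iff.mp h
  obtain ⟨n, c, h0, hn, hc⟩ := exists_path_of_reflTransGen hbq
  -- The cycle is `q, c 0, …, c n = q`, of length `n + 1`; `d` enumerates it.
  let d : ℕ → Q := fun k => Nat.casesOn k q c
  have hd : ∀ i < n + 1, R (d i) (d (i + 1)) := by
    rintro (_ | i) hi
    · simpa [d, h0] using hb
    · exact hc i (by omega)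
  refine ⟨fun i => d (i % (n + 1)), by simp [d], fun i => ?_, fun k => ?_⟩
  · have hlt : i % (n + 1) < n + 1 := Nat.mod_lt _ n.succ_pos
    have hstep := hd _ hlt
    rcases Nat.lt_or_ge (i % (n + 1) + 1) (n + 1) with hi | hi
    · have hmod : (i + 1) % (n + 1) = i % (n + 1) + 1 := by
        rw [← Nat.mod_add_mod, Nat.mod_eq_of_lt hi]
      simpa only [hmod] using hstep
    · -- At the end of a lap the path wraps around, which is consistent because `d (n + 1) = d 0`.
      have hi' : i % (n + 1) + 1 = n + 1 := by omega
      have hmod : (i + 1) % (n + 1) = 0 := by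
        rw [← Nat.mod_add_mod, hi', Nat.mod_self]
      have hwrap : d (i % (n + 1) + 1) = d 0 := by rw [hi']; exact hn
      rw [hwrap] at hstep
      simpa only [hmod] using hstep
  · exact ⟨(n + 1) * k, Nat.le_mul_of_pos_left k n.succ_pos, by simp [d]⟩

lemma exists_seq_of_reflTransGen {p q : Q} (hpq : Relation.ReflTransGen R p q)
    (hq : Relation.TransGen R q q) :
    ∃ s : ℕ → Q, s 0 = p ∧ (∀ i, R (s i) (s (i + 1))) ∧ ∀ n, ∃ m, n ≤ m ∧ s m = q := by
  induction hpq using Relation.ReflTransGen.head_induction_on with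
  | refl => exact exists_seq_of_transGen_self hq
  | @head a b hab _ ih =>
    obtain ⟨s, h0, hs, hinf⟩ := ih
    refine ⟨fun k => Nat.casesOn k a s, rfl, ?_, fun n => ?_⟩
    · rintro (_ | i)
      · simpa [h0] using hab
      · exact hs i
    · obtain ⟨m, hm, hsm⟩ := hinf n
      exact ⟨m + 1, by omega, hsm⟩

lemma reflTransGen_of_seq {s : ℕ → Q} (hs : ∀ i, R (s i) (s (i + 1))) {m n : ℕ} (h : m ≤ n) :
    Relation.ReflTransGen R (s m) (s n) := by
  induction n, h using Nat.le_induction with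
  | base => exact .refl
  | succ n _ ih => exact ih.tail (hs n)

end Paths

/-- `L(ℬ)` is nonempty iff some accepting state is reachable from the
initial state via useful transitions and lies on a nontrivial useful cycle. -/
theorem buchiLang_nonempty_iff {A : Type u} (M : SLA A) :
    M.buchiLang.Nonempty ↔
      ∃ q ∈ M.F, Relation.ReflTransGen
          (fun p q => ∃ φ, (p, φ, q) ∈ M.Δ ∧ φ.Nonempty) M.q0 q ∧
        Relation.TransGen
          (fun p q => ∃ φ, (p, φ, q) ∈ M.Δ ∧ φ.Nonempty) q q := by
  constructor
  · rintro ⟨α, ρ, ⟨h0, hρ⟩, hinf⟩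
    have hR : ∀ i, ∃ φ, (ρ i, φ, ρ (i + 1)) ∈ M.Δ ∧ φ.Nonempty := fun i =>
      let ⟨φ, hφ, hα⟩ := hρ i
      ⟨φ, hφ, α i, hα⟩
    have := M.fin
    have hS : {m | ρ m ∈ M.F}.Infinite :=
      Set.infinite_of_forall_exists_gt fun n =>
        let ⟨m, hm, hF⟩ := hinf (n + 1)
        ⟨m, hF, hm⟩
    obtain ⟨x, hx, y, -, hxy, heq⟩ :=
      hS.exists_lt_map_eq_of_mapsTo (f := ρ) (fun _ _ => Set.mem_univ _) Set.finite_univ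
    refine ⟨ρ x, hx, ?_, ?_⟩
    · rw [← h0]
      exact reflTransGen_of_seq (R := fun p q => ∃ φ, (p, φ, q) ∈ M.Δ ∧ φ.Nonempty) hR x.zero_le
    · have hpath := reflTransGen_of_seq
        (R := fun p q => ∃ φ, (p, φ, q) ∈ M.Δ ∧ φ.Nonempty) hR (Nat.succ_le_of_lt hxy)
      rw [← heq] at hpath
      exact Relation.TransGen.head' (hR x) hpath
  · rintro ⟨q, hqF, hreach, hcycle⟩
    obtain ⟨s, h0, hs, hinf⟩ := exists_seq_of_reflTransGen hreach hcycle
    choose φ hφ α hα using hs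
    refine ⟨α, s, ⟨h0, fun i => ⟨φ i, hφ i, hα i⟩⟩, fun n => ?_⟩
    obtain ⟨m, hm, hsm⟩ := hinf n
    exact ⟨m, hm, hsm ▸ hqF⟩
end

section
/- If L ⊆ (ℕ → A) is Büchi-recognizable over A by a set-labeled Büchi automaton, then its complement {α : ℕ → A | α ∉ L} is Büchi-recognizable over A. -/
/-!
The complement is recognized by an automaton that guesses a factorization of the input into
finite blocks (Büchi's argument).

The *profile* of a finite word records which pairs of states of `M` are connected by a run on that
word, and which of them by a run that enters an accepting state. There are finitely many profiles,
and the profile of `ua` is determined by that of `u` and the letter `a`. If `α` factors as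
`u v₀ v₁ v₂ …` where `u` has profile `s` and every `vₖ` has profile `e`, then whether `M` accepts
`α` depends on `(s, e)` only (`mem_buchiLang_iff_pairAccepts`). A Ramsey argument, carried out with
a nonprincipal ultrafilter on `ℕ`, shows that every `α` has such a factorization
(`exists_factorization`); no idempotence of `e` is needed. Hence `α` is rejected by `M` iff it has
a factorization whose pair `(s, e)` is not accepting, and this is checked by the Büchi automaton
with transition relation `complStep`, which computes profiles deterministically and guesses `e` and
the places of the cuts.

Since labels are arbitrary sets of letters, any transition relation `R : Q → A → Q → Prop` on a
finite `Q` is realized by the finitely many transitions `(p, {a | R p a q}, q)`, so infinite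
alphabets cause no difficulty (`buchiRecognizable_of_rel`).
-/


universe u

namespace SLA

variable {A : Type u}

theorem buchiRecognizable_of_rel {Q : Type} [Finite Q] (q0 : Q) (R : Q → A → Q → Prop)
    (F : Set Q) :
    BuchiRecognizable A {α | ∃ ρ : ℕ → Q, (ρ 0 = q0 ∧ ∀ i, R (ρ i) (α i) (ρ (i + 1))) ∧
      ∀ n, ∃ m, n ≤ m ∧ ρ m ∈ F} := by
  obtain ⟨l, hl⟩ : ∃ l : List (Q × Q), ∀ x, x ∈ l := by
    have := Fintype.ofFinite (Q × Q)
    exact ⟨Finset.univ.toList, by simp⟩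
  refine ⟨⟨Q, ‹_›, q0, l.map fun x => (x.1, {a | R x.1 a x.2}, x.2), F⟩, ?_⟩
  ext α
  have key : ∀ p q a, (∃ φ, (p, φ, q) ∈ (l.map fun x : Q × Q =>
      (x.1, {a | R x.1 a x.2}, x.2)) ∧ a ∈ φ) ↔ R p a q := by
    intro p q a
    constructor
    · rintro ⟨φ, hφ, ha⟩
      rw [List.mem_map] at hφ
      obtain ⟨⟨p', q'⟩, -, h⟩ := hφ
      simp only [Prod.mk.injEq] at h
      obtain ⟨rfl, rfl, rfl⟩ := h
      exact ha
    · intro h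
      exact ⟨{a | R p a q}, List.mem_map.2 ⟨(p, q), hl _, rfl⟩, h⟩
  simp only [buchiLang, InfRun, Set.mem_ofPred_eq, key]

/-! ### Profiles -/

/-- Profiles of finite words: `x p q false` says that there is a run from `p` to `q`, and
`x p q true` that there is one entering an accepting state after its first state. -/
abbrev Profile (M : SLA A) : Type := M.Q → M.Q → Bool → Prop

/-- The profile of the empty word. -/
def emptyProfile (M : SLA A) : M.Profile := fun p q b => p = q ∧ b = false

/-- The profile of `ua`, computed from the profile `x` of `u`. -/
def extend (M : SLA A) (x : M.Profile) (a : A) : M.Profile := fun p q b =>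
  ∃ r c, x p r c ∧ M.Step r a q ∧ (b = true → c = true ∨ q ∈ M.F)

/-- The profile of the factor of `α` of length `n` starting at position `i`. -/
def profile (M : SLA A) (α : ℕ → A) (i : ℕ) : ℕ → M.Profile
  | 0 => M.emptyProfile
  | n + 1 => M.extend (profile M α i n) (α (i + n))

/-- `σ` respects the transitions of `M` while reading the positions `i ≤ m < j` of `α`. -/
def RunsBetween (M : SLA A) (α : ℕ → A) (i j : ℕ) (σ : ℕ → M.Q) : Prop :=
  ∀ m, i ≤ m → m < j → M.Step (σ m) (α m) (σ (m + 1))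

theorem profile_of_run (M : SLA A) (α : ℕ → A) (i n : ℕ) (σ : ℕ → M.Q)
    (h : M.RunsBetween α i (i + n) σ) (b : Bool)
    (hb : b = true → ∃ m, i < m ∧ m ≤ i + n ∧ σ m ∈ M.F) :
    M.profile α i n (σ i) (σ (i + n)) b := by
  induction n generalizing b with
  | zero =>
    refine ⟨rfl, ?_⟩
    cases b
    · rfl
    · obtain ⟨m, h1, h2, -⟩ := hb rfl
      omega
  | succ n ih =>
    have h' : M.RunsBetween α i (i + n) σ := fun m h1 h2 => h m h1 (by omega)
    have hs := h (i + n) (by omega) (by omega)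
    by_cases hv : ∃ m, i < m ∧ m ≤ i + n ∧ σ m ∈ M.F
    · exact ⟨_, true, ih h' true fun _ => hv, hs, fun _ => Or.inl rfl⟩
    · refine ⟨_, false, ih h' false (by simp), hs, fun hb' => Or.inr ?_⟩
      obtain ⟨m, h1, h2, h3⟩ := hb hb'
      by_cases hm : m ≤ i + n
      · exact absurd ⟨m, h1, hm, h3⟩ hv
      · obtain rfl : m = i + (n + 1) := by omega
        exact h3

theorem exists_run_of_profile (M : SLA A) (α : ℕ → A) (i n : ℕ) (p q : M.Q) (b : Bool)
    (h : M.profile α i n p q b) :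
    ∃ σ : ℕ → M.Q, σ i = p ∧ σ (i + n) = q ∧ M.RunsBetween α i (i + n) σ ∧
      (b = true → ∃ m, i < m ∧ m ≤ i + n ∧ σ m ∈ M.F) := by
  induction n generalizing q b with
  | zero =>
    obtain ⟨rfl, rfl⟩ := h
    exact ⟨fun _ => p, rfl, rfl, fun m h1 h2 => by omega, by simp⟩
  | succ n ih =>
    obtain ⟨r, c, hx, hs, hb⟩ := h
    obtain ⟨σ, h0, h1, h2, h3⟩ := ih r c hx
    have hlt : ∀ m, m ≤ i + n → (if m ≤ i + n then σ m else q) = σ m := fun m hm => if_pos hm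
    have hend : (if i + (n + 1) ≤ i + n then σ (i + (n + 1)) else q) = q := if_neg (by omega)
    refine ⟨fun m => if m ≤ i + n then σ m else q, ?_, hend, ?_, ?_⟩
    · simp [h0]
    · intro m hm1 hm2
      by_cases hm : m < i + n
      · simp only [hlt m (by omega), hlt (m + 1) (by omega)]
        exact h2 m hm1 hm
      · obtain rfl : m = i + n := by omega
        have hlast : (if i + n + 1 ≤ i + n then σ (i + n + 1) else q) = q := if_neg (by omega)
        simp only [hlast, le_refl, if_true, h1]
        exact hs
    · intro hbt
      rcases hb hbt with hc | hq
      · obtain ⟨m, hm1, hm2, hm3⟩ := h3 hc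
        exact ⟨m, hm1, by omega, by simpa only [hlt m hm2] using hm3⟩
      · exact ⟨i + (n + 1), by omega, le_rfl, by simpa only [hend] using hq⟩

/-! ### Factorizations -/

/-- The sequence `ι` cuts `α` into a prefix of profile `s` and infinitely many nonempty blocks
`[ι k, ι (k + 1))` of profile `e`. -/
structure Factorization (M : SLA A) (α : ℕ → A) (s e : M.Profile) (ι : ℕ → ℕ) : Prop where
  mono : StrictMono ι
  prefix_eq : M.profile α 0 (ι 0) = s
  block_eq : ∀ k, M.profile α (ι k) (ι (k + 1) - ι k) = e

/-- `M` has an accepting run on words that factor into a prefix of profile `s` and infinitely many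
blocks of profile `e`, expressed through the states `p k` at the cuts. -/
def PairAccepts (M : SLA A) (s e : M.Profile) : Prop :=
  ∃ p : ℕ → M.Q, s M.q0 (p 0) false ∧ (∀ k, e (p k) (p (k + 1)) false) ∧
    ∀ n, ∃ k, n ≤ k ∧ e (p k) (p (k + 1)) true

theorem exists_block {ι : ℕ → ℕ} (hι : StrictMono ι) (m : ℕ) (hm : ι 0 ≤ m) :
    ∃ k, ι k ≤ m ∧ m < ι (k + 1) := by
  induction m, hm using Nat.le_induction with
  | base => exact ⟨0, le_rfl, hι (by omega)⟩
  | succ m hm ih =>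
    obtain ⟨k, h1, h2⟩ := ih
    by_cases h : m + 1 < ι (k + 1)
    · exact ⟨k, by omega, h⟩
    · exact ⟨k + 1, by omega, lt_of_le_of_lt (by omega) (hι (Nat.lt_succ_self (k + 1)))⟩

theorem block_unique {ι : ℕ → ℕ} (hι : StrictMono ι) {m k l : ℕ} (h1 : ι k ≤ m)
    (h2 : m < ι (k + 1)) (h3 : ι l ≤ m) (h4 : m < ι (l + 1)) : k = l := by
  have a : k < l + 1 := hι.lt_iff_lt.1 (by omega)
  have b : l < k + 1 := hι.lt_iff_lt.1 (by omega)
  omega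

theorem mem_buchiLang_iff_pairAccepts (M : SLA A) {α : ℕ → A} {s e : M.Profile} {ι : ℕ → ℕ}
    (H : M.Factorization α s e ι) : α ∈ M.buchiLang ↔ M.PairAccepts s e := by
  have hι := H.mono
  have hlen : ∀ k, ι k + (ι (k + 1) - ι k) = ι (k + 1) := fun k => by
    have := hι (Nat.lt_succ_self k)
    simp only [Nat.succ_eq_add_one] at this
    omega
  constructor
  · rintro ⟨ρ, ⟨h0, hstep⟩, hF⟩
    have hrun : ∀ i j, M.RunsBetween α i j ρ := fun i j m _ _ => hstep m
    have hblock : ∀ k b, (b = true → ∃ m, ι k < m ∧ m ≤ ι (k + 1) ∧ ρ m ∈ M.F) →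
        e (ρ (ι k)) (ρ (ι (k + 1))) b := by
      intro k b hb
      have := M.profile_of_run α (ι k) (ι (k + 1) - ι k) ρ (hrun _ _) b
        (by rw [hlen]; exact hb)
      rwa [H.block_eq, hlen] at this
    refine ⟨fun k => ρ (ι k), ?_, fun k => hblock k false (by simp), fun n => ?_⟩
    · have := M.profile_of_run α 0 (ι 0) ρ (hrun _ _) false (by simp)
      rwa [H.prefix_eq, h0, zero_add] at this
    · obtain ⟨m, hm, hmF⟩ := hF (ι n + 1)
      -- Visits are counted in the half-open blocks `(ι k, ι (k + 1)]`, hence the shift to `m - 1`.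
      obtain ⟨k, hk1, hk2⟩ := exists_block hι (m - 1)
        (by have := hι.monotone (Nat.zero_le n); omega)
      have : n < k + 1 := hι.lt_iff_lt.1 (by omega)
      exact ⟨k, by omega, hblock k true fun _ => ⟨m, by omega, by omega, hmF⟩⟩
  · rintro ⟨p, hs, he, hinf⟩
    rw [← H.prefix_eq] at hs
    obtain ⟨τ, hτ0, hτ1, hτ, -⟩ := M.exists_run_of_profile _ _ _ _ _ _ hs
    rw [zero_add] at hτ1 hτ
    have hσ : ∀ k, ∃ σ : ℕ → M.Q, σ (ι k) = p k ∧ σ (ι (k + 1)) = p (k + 1) ∧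
        M.RunsBetween α (ι k) (ι (k + 1)) σ ∧
        (e (p k) (p (k + 1)) true → ∃ m, ι k < m ∧ m ≤ ι (k + 1) ∧ σ m ∈ M.F) := by
      intro k
      have aux : ∀ b, e (p k) (p (k + 1)) b → ∃ σ : ℕ → M.Q, σ (ι k) = p k ∧
          σ (ι (k + 1)) = p (k + 1) ∧ M.RunsBetween α (ι k) (ι (k + 1)) σ ∧
          (b = true → ∃ m, ι k < m ∧ m ≤ ι (k + 1) ∧ σ m ∈ M.F) := by
        intro b hb
        rw [← H.block_eq k] at hb
        have := M.exists_run_of_profile _ _ _ _ _ _ hb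
        rwa [hlen] at this
      by_cases ht : e (p k) (p (k + 1)) true
      · obtain ⟨σ, h1, h2, h3, h4⟩ := aux true ht
        exact ⟨σ, h1, h2, h3, fun _ => h4 rfl⟩
      · obtain ⟨σ, h1, h2, h3, -⟩ := aux false (he k)
        exact ⟨σ, h1, h2, h3, fun h => absurd h ht⟩
    choose σ hσ0 hσ1 hσ2 hσ3 using hσ
    choose! κ hκ1 hκ2 using exists_block hι
    have hι0 : ∀ k, ι 0 ≤ ι k := fun k => hι.monotone (Nat.zero_le k)
    have hκ : ∀ k m, ι k ≤ m → m < ι (k + 1) → κ m = k := fun k m h1 h2 =>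
      have h := (hι0 k).trans h1
      block_unique hι (hκ1 m h) (hκ2 m h) h1 h2
    let ρ : ℕ → M.Q := fun m => if m < ι 0 then τ m else σ (κ m) m
    -- The two adjacent segments agree at a cut, so both closed ends of a block are covered.
    have hρ : ∀ k m, ι k ≤ m → m ≤ ι (k + 1) → ρ m = σ k m := by
      intro k m h1 h2
      have hm : ¬ m < ι 0 := by have := hι0 k; omega
      simp only [ρ, if_neg hm]
      rcases h2.lt_or_eq with h2 | rfl
      · rw [hκ k m h1 h2]
      · rw [hκ (k + 1) _ le_rfl (hι (Nat.lt_succ_self (k + 1))), hσ0, hσ1]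
    have hρ' : ∀ m, m ≤ ι 0 → ρ m = τ m := by
      intro m hm
      rcases hm.lt_or_eq with hm | rfl
      · simp only [ρ, if_pos hm]
      · rw [hρ 0 _ le_rfl (hι0 1), hσ0, hτ1]
    refine ⟨ρ, ⟨by rw [hρ' 0 (Nat.zero_le _), hτ0], fun m => ?_⟩, fun n => ?_⟩
    · change M.Step _ _ _
      by_cases hm : m < ι 0
      · rw [hρ' m hm.le, hρ' (m + 1) hm]
        exact hτ m (Nat.zero_le _) hm
      · obtain ⟨k, hk1, hk2⟩ := exists_block hι m (by omega)
        rw [hρ k m hk1 hk2.le, hρ k (m + 1) (by omega) hk2]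
        exact hσ2 k m hk1 hk2
    · obtain ⟨k, hnk, hk⟩ := hinf n
      obtain ⟨m, hm1, hm2, hmF⟩ := hσ3 k hk
      have := hι.le_apply (x := k)
      exact ⟨m, by omega, by rwa [hρ k m hm1.le hm2]⟩

/-- A set `G` of positions in which each one starts a block of profile `e` ending at a later
position of `G` yields a factorization. -/
theorem exists_factorization_of_step (M : SLA A) (α : ℕ → A) (e : M.Profile) (G : Set ℕ)
    (i₀ : ℕ) (hi₀ : i₀ ∈ G)
    (hG : ∀ i ∈ G, ∃ j ∈ G, i < j ∧ M.profile α i (j - i) = e) :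
    ∃ ι, M.Factorization α (M.profile α 0 i₀) e ι := by
  choose! f hf1 hf2 hf3 using hG
  have hmem : ∀ k, f^[k] i₀ ∈ G := by
    intro k
    induction k with
    | zero => exact hi₀
    | succ k ih => rw [Function.iterate_succ_apply']; exact hf1 _ ih
  refine ⟨fun k => f^[k] i₀, strictMono_nat_of_lt_succ fun k => ?_, rfl, fun k => ?_⟩
  · rw [Function.iterate_succ_apply']
    exact hf2 _ (hmem k)
  · simp only [Function.iterate_succ_apply']
    exact hf3 _ (hmem k)

theorem exists_eventually_eq {T : Type*} [Finite T] (U : Ultrafilter ℕ) (c : ℕ → T) :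
    ∃ t, ∀ᶠ j in (U : Filter ℕ), c j = t := by
  have h : ∀ᶠ j in (U : Filter ℕ), ∃ t, c j = t := Filter.Eventually.of_forall fun j => ⟨_, rfl⟩
  exact Ultrafilter.eventually_exists_iff.1 h

theorem exists_factorization (M : SLA A) (α : ℕ → A) :
    ∃ s e ι, M.Factorization α s e ι := by
  have := M.fin
  let U := Filter.hyperfilter ℕ
  -- `c i` is the profile of the factor from `i` to `j` for `U`-almost all `j`,
  -- and `e` is the value of `c` at `U`-almost all positions.
  choose c hc using fun i => exists_eventually_eq U fun j => M.profile α i (j - i)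
  obtain ⟨e, he⟩ := exists_eventually_eq U c
  have hgt : ∀ i, ∀ᶠ j in (U : Filter ℕ), i < j := fun i =>
    (Nat.hyperfilter_le_atTop) (Filter.eventually_gt_atTop i)
  obtain ⟨i₀, hi₀⟩ := he.exists
  obtain ⟨ι, hι⟩ := M.exists_factorization_of_step α e {i | c i = e} i₀ hi₀ fun i hi => by
    obtain ⟨j, h1, h2, h3⟩ := (he.and ((hgt i).and (hc i))).exists
    exact ⟨j, h1, h2, h3.trans hi⟩
  exact ⟨_, e, ι, hι⟩

/-! ### The complement automaton -/

/-- States of the complement automaton: `inl x` while reading the prefix, which has profile `x` so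
far; `inr (e, x, b)` while reading blocks of guessed profile `e`, where the current block has
profile `x` so far and `b` says that it consists of a single letter. -/
abbrev ComplState (M : SLA A) : Type := M.Profile ⊕ (M.Profile × M.Profile × Bool)

/-- Transitions of the complement automaton. A cut is made before the letter `a` is read, so blocks
are never empty; the first cut guesses `e` and tests that `(s, e)` is not accepting, and each later
one tests that the block just finished has profile `e`. -/
def complStep (M : SLA A) : M.ComplState → A → M.ComplState → Prop
  | .inl s, a, .inl s' => s' = M.extend s a
  | .inl s, a, .inr (e, x, b) =>
      ¬ M.PairAccepts s e ∧ x = M.extend M.emptyProfile a ∧ b = true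
  | .inr _, _, .inl _ => False
  | .inr (e, x, _), a, .inr (e', x', b') =>
      e' = e ∧ ((x' = M.extend x a ∧ b' = false) ∨
        (x = e ∧ x' = M.extend M.emptyProfile a ∧ b' = true))

/-- The accepting states: a cut has just been made. -/
def complFinal (M : SLA A) : Set M.ComplState := {q | ∃ e x, q = .inr (e, x, true)}

theorem exists_factorization_of_complRun (M : SLA A) (α : ℕ → A) (ρ : ℕ → M.ComplState)
    (h0 : ρ 0 = .inl M.emptyProfile) (hstep : ∀ i, M.complStep (ρ i) (α i) (ρ (i + 1)))
    (hF : ∀ n, ∃ m, n ≤ m ∧ ρ m ∈ M.complFinal) :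
    ∃ s e ι, M.Factorization α s e ι ∧ ¬ M.PairAccepts s e := by
  classical
  have hex : ∃ i, ∃ y, ρ i = .inr y := by
    obtain ⟨m, -, e, x, h⟩ := hF 0
    exact ⟨m, _, h⟩
  obtain ⟨i₀, hi₀, hmin⟩ : ∃ i₀, (∃ y, ρ (i₀ + 1) = .inr y) ∧ ∀ i ≤ i₀, ¬ ∃ y, ρ i = .inr y := by
    have hpos : Nat.find hex ≠ 0 := by
      intro h
      have := Nat.find_spec hex
      rw [h, h0] at this
      simp at this
    refine ⟨Nat.find hex - 1, ?_, fun i hi => Nat.find_min hex (by omega)⟩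
    rw [Nat.sub_add_cancel (by omega)]
    exact Nat.find_spec hex
  have hpre : ∀ i ≤ i₀, ρ i = .inl (M.profile α 0 i) := by
    intro i hi
    induction i with
    | zero => exact h0
    | succ i ih =>
      have h := hstep i
      rw [ih (by omega)] at h
      rcases hr : ρ (i + 1) with x | y
      · rw [hr] at h
        rw [show x = _ from h]
        simp [profile]
      · exact absurd ⟨y, hr⟩ (hmin _ hi)
  obtain ⟨⟨e, x, b⟩, hy⟩ := hi₀
  have h := hstep i₀
  rw [hpre i₀ le_rfl, hy] at h
  obtain ⟨hbad, rfl, rfl⟩ := h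
  suffices hs : ∃ ι, M.Factorization α (M.profile α 0 i₀) e ι by
    obtain ⟨ι, hι⟩ := hs
    exact ⟨_, e, ι, hι, hbad⟩
  refine M.exists_factorization_of_step α e
    {i | ρ (i + 1) = .inr (e, M.extend M.emptyProfile (α i), true)} i₀ hy fun i hi => ?_
  have hnext : ∃ j, i < j ∧ ρ (j + 1) ∈ M.complFinal := by
    obtain ⟨m, hm, h⟩ := hF (i + 2)
    exact ⟨m - 1, by omega, by rwa [Nat.sub_add_cancel (by omega)]⟩
  obtain ⟨j, ⟨hij, hj⟩, hjmin⟩ : ∃ j, (i < j ∧ ρ (j + 1) ∈ M.complFinal) ∧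
      ∀ m < j, ¬ (i < m ∧ ρ (m + 1) ∈ M.complFinal) :=
    ⟨Nat.find hnext, Nat.find_spec hnext, fun m => Nat.find_min hnext⟩
  have hblock : ∀ n, i + n < j → ∃ b, ρ (i + n + 1) = .inr (e, M.profile α i (n + 1), b) := by
    intro n hn
    induction n with
    | zero => exact ⟨true, hi⟩
    | succ n ih =>
      obtain ⟨b, hb⟩ := ih (by omega)
      have h := hstep (i + n + 1)
      rw [hb] at h
      rcases hr : ρ (i + n + 1 + 1) with x | ⟨e', x', b'⟩
      · rw [hr] at h
        exact h.elim
      · rw [hr] at h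
        obtain ⟨rfl, ⟨rfl, rfl⟩ | ⟨-, -, rfl⟩⟩ := h
        · exact ⟨false, rfl⟩
        · exact absurd ⟨by omega, _, _, hr⟩ (hjmin (i + n + 1) hn)
  obtain ⟨b, hb⟩ := hblock (j - i - 1) (by omega)
  rw [show i + (j - i - 1) + 1 = j by omega, show j - i - 1 + 1 = j - i by omega] at hb
  obtain ⟨e', x', hj'⟩ := hj
  have h := hstep j
  rw [hb, hj'] at h
  obtain ⟨rfl, ⟨-, h⟩ | ⟨h1, rfl, -⟩⟩ := h
  · simp at h
  · exact ⟨j, hj', hij, h1⟩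

theorem exists_complRun_of_factorization (M : SLA A) {α : ℕ → A} {s e : M.Profile} {ι : ℕ → ℕ}
    (H : M.Factorization α s e ι) (hbad : ¬ M.PairAccepts s e) :
    ∃ ρ : ℕ → M.ComplState, (ρ 0 = .inl M.emptyProfile ∧
      ∀ i, M.complStep (ρ i) (α i) (ρ (i + 1))) ∧ ∀ n, ∃ m, n ≤ m ∧ ρ m ∈ M.complFinal := by
  have hι := H.mono
  choose! κ hκ1 hκ2 using exists_block hι
  have hι0 : ∀ k, ι 0 ≤ ι k := fun k => hι.monotone (Nat.zero_le k)
  have hκ : ∀ k m, ι k ≤ m → m < ι (k + 1) → κ m = k := fun k m h1 h2 =>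
    have h := (hι0 k).trans h1
    block_unique hι (hκ1 m h) (hκ2 m h) h1 h2
  let ρ : ℕ → M.ComplState := fun m =>
    if m ≤ ι 0 then .inl (M.profile α 0 m)
    else .inr (e, M.profile α (ι (κ (m - 1))) (m - ι (κ (m - 1))),
      decide (m - 1 = ι (κ (m - 1))))
  have hpre : ∀ m ≤ ι 0, ρ m = .inl (M.profile α 0 m) := fun m hm => if_pos hm
  have hblock : ∀ k m, ι k ≤ m → m < ι (k + 1) →
      ρ (m + 1) = .inr (e, M.profile α (ι k) (m - ι k + 1), decide (m = ι k)) := by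
    intro k m h1 h2
    have := hι0 k
    simp only [ρ, if_neg (show ¬ m + 1 ≤ ι 0 by omega), Nat.add_sub_cancel, hκ k m h1 h2,
      Nat.sub_add_comm h1]
  have hcut : ∀ k, ρ (ι k + 1) = .inr (e, M.extend M.emptyProfile (α (ι k)), true) := by
    intro k
    rw [hblock k _ le_rfl (hι (Nat.lt_succ_self k))]
    simp [profile]
  refine ⟨ρ, ⟨hpre 0 (Nat.zero_le _), fun m => ?_⟩, fun n => ?_⟩
  · rcases lt_trichotomy m (ι 0) with hm | rfl | hm
    · rw [hpre m hm.le, hpre (m + 1) hm]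
      simp [complStep, profile]
    · rw [hpre _ le_rfl, hcut, H.prefix_eq]
      exact ⟨hbad, rfl, rfl⟩
    · obtain ⟨m, rfl⟩ : ∃ m', m = m' + 1 := ⟨m - 1, by omega⟩
      obtain ⟨k, hk1, hk2⟩ := exists_block hι m (by omega)
      by_cases hm' : m + 1 < ι (k + 1)
      · rw [hblock k m hk1 hk2, hblock k (m + 1) (by omega) hm']
        refine ⟨rfl, Or.inl ⟨?_, by simp; omega⟩⟩
        rw [show m + 1 - ι k + 1 = (m - ι k + 1) + 1 by omega, profile,
          show ι k + (m - ι k + 1) = m + 1 by omega]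
      · have hend : m + 1 = ι (k + 1) := by omega
        have h := hcut (k + 1)
        rw [← hend] at h
        rw [h, hblock k m hk1 hk2]
        refine ⟨rfl, Or.inr ⟨?_, rfl, rfl⟩⟩
        rw [show m - ι k + 1 = ι (k + 1) - ι k by omega, H.block_eq]
  · have := hι.le_apply (x := n)
    exact ⟨ι n + 1, by omega, _, _, hcut n⟩

end SLA

/-- Büchi-recognizable ω-languages are closed under complement. -/
theorem buchiRecognizable_compl {A : Type u} (L : Set (ℕ → A))
    (h : BuchiRecognizable A L) :
    BuchiRecognizable A {α : ℕ → A | α ∉ L} := by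
  obtain ⟨M, rfl⟩ := h
  have := M.fin
  convert SLA.buchiRecognizable_of_rel (Sum.inl M.emptyProfile) M.complStep M.complFinal using 1
  ext α
  constructor
  · intro hα
    obtain ⟨s, e, ι, H⟩ := M.exists_factorization α
    exact M.exists_complRun_of_factorization H
      fun h => hα ((M.mem_buchiLang_iff_pairAccepts H).2 h)
  · rintro ⟨ρ, ⟨h0, hstep⟩, hF⟩ hα
    obtain ⟨s, e, ι, H, hbad⟩ := M.exists_factorization_of_complRun α ρ h0 hstep hF
    exact hbad ((M.mem_buchiLang_iff_pairAccepts H).1 hα)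
end

section
/- Let ℬ be a set-labeled Büchi automaton over A, and let τ₀, τ be transition profiles of ℬ with classes U_{τ₀} = {u | tp(u) = τ₀} and U_τ = {u | tp(u) = τ}. If α and β are both elements of the ω-language U_{τ₀} · (U_τ)^ω, then α ∈ L(ℬ) if and only if β ∈ L(ℬ). In particular, for any two ∼_ℬ-equivalence classes U, V, the set U · V^ω is either contained in L(ℬ) or disjoint from L(ℬ). -/
/-!
The transition profile of a word records, for every pair of states, whether a run between them on
that word exists, and whether one exists that visits `F`. Cut `α` and `β` into blocks so that
corresponding blocks have equal profiles. Given a successful run `ρ` on `α`, each block of `β`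
carries a run between the two states that `ρ` has at the ends of the corresponding block of `α`,
and this run can be taken through `F` whenever `ρ` visits `F` on that block. These finite runs agree
at the cut points and glue to a run on `β` (`exists_glue`), which visits `F` infinitely often since
infinitely many blocks do (`mem_buchiLang_of_cuts`).
-/

universe u

theorem length_extract {A : Type u} (α : ℕ → A) (i j : ℕ) : (extract α i j).length = j - i := by
  simp [extract]

theorem SLA.finRunOn_extract {A : Type u} (M : SLA A) (α : ℕ → A) (a b : ℕ) (ρ : ℕ → M.Q) :
    M.FinRunOn (extract α a b) ρ ↔
      ∀ i < b - a, ∃ φ, (ρ i, φ, ρ (i + 1)) ∈ M.Δ ∧ α (a + i) ∈ φ := by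
  simp [SLA.FinRunOn, extract]

/-- Cut points `0 = d 0 ≤ d 1 < d 2 < ⋯`. The first block may be empty, the others not. -/
structure IsCut (d : ℕ → ℕ) : Prop where
  zero : d 0 = 0
  mono : Monotone d
  lt : ∀ j, d (j + 1) < d (j + 2)

theorem IsCut.le {d : ℕ → ℕ} (hd : IsCut d) (j : ℕ) : j ≤ d (j + 1) := by
  induction j with
  | zero => exact Nat.zero_le _
  | succ j ih => exact Nat.succ_le_of_lt (ih.trans_lt (hd.lt j))

theorem IsCut.exists_block {d : ℕ → ℕ} (hd : IsCut d) (n : ℕ) :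
    ∃ j, d j ≤ n ∧ n < d (j + 1) := by
  classical
  have h : ∃ j, n < d (j + 1) := ⟨n + 1, hd.le (n + 1)⟩
  refine ⟨Nat.find h, ?_, Nat.find_spec h⟩
  rcases hk : Nat.find h with _ | k
  · simp [hd.zero]
  · exact not_lt.1 (Nat.find_min h (m := k) (by omega))

theorem IsCut.block_unique {d : ℕ → ℕ} (hd : IsCut d) {n j k : ℕ}
    (h₁ : d j ≤ n) (h₂ : n < d (j + 1)) (h₃ : d k ≤ n) (h₄ : n < d (k + 1)) : j = k := by
  rcases lt_trichotomy j k with h | h | h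
  · have := hd.mono (show j + 1 ≤ k from h); omega
  · exact h
  · have := hd.mono (show k + 1 ≤ j from h); omega

/-- Functions `π j` on the blocks of a cut that agree at the cut points are the restrictions of a
single function, closed right ends of the blocks included. -/
theorem IsCut.exists_glue {Q : Type*} {d : ℕ → ℕ} (hd : IsCut d) (π : ℕ → ℕ → Q)
    (hπ : ∀ j, π j (d (j + 1) - d j) = π (j + 1) 0) :
    ∃ ρ : ℕ → Q, ∀ j, ∀ i ≤ d (j + 1) - d j, ρ (d j + i) = π j i := by
  choose k hk₁ hk₂ using hd.exists_block
  have key : ∀ j i, i < d (j + 1) - d j → π (k (d j + i)) (d j + i - d (k (d j + i))) = π j i := by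
    intro j i hi
    have hkj : k (d j + i) = j :=
      hd.block_unique (hk₁ _) (hk₂ _) (by omega) (by omega)
    rw [hkj, Nat.add_sub_cancel_left]
  refine ⟨fun n => π (k n) (n - d (k n)), fun j i hi => ?_⟩
  rcases hi.lt_or_eq with h | h
  · exact key j i h
  · -- The right end of block `j` is the left end of block `j + 1`, which is nonempty.
    have h₁ := hd.mono (Nat.le_succ j)
    have h₂ := hd.lt j
    have h₃ : d j + i = d (j + 1) + 0 := by
      simp only [Nat.succ_eq_add_one] at h₁; omega
    have h₄ := key (j + 1) 0 (by rw [show j + 1 + 1 = j + 2 from rfl]; omega)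
    rw [← h₃] at h₄
    rw [h, hπ, ← h₄, h]

/-- If `α` and `β` are cut into blocks with equal transition profiles, a successful run on `α`
yields one on `β`. -/
theorem SLA.mem_buchiLang_of_cuts {A : Type u} (M : SLA A) {α β : ℕ → A} {c d : ℕ → ℕ}
    (hc : IsCut c) (hd : IsCut d)
    (htp : ∀ j, M.tp (extract α (c j) (c (j + 1))) = M.tp (extract β (d j) (d (j + 1))))
    (hα : α ∈ M.buchiLang) : β ∈ M.buchiLang := by
  obtain ⟨ρ, ⟨hρ0, hρ⟩, hinf⟩ := hα
  have block : ∀ j, ∃ π : ℕ → M.Q, π 0 = ρ (c j) ∧ π (d (j + 1) - d j) = ρ (c (j + 1)) ∧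
      M.FinRunOn (extract β (d j) (d (j + 1))) π ∧
      ((∃ m, c j ≤ m ∧ m ≤ c (j + 1) ∧ ρ m ∈ M.F) →
        ∃ i ≤ d (j + 1) - d j, π i ∈ M.F) := by
    intro j
    have hle : c j ≤ c (j + 1) := hc.mono (Nat.le_succ j)
    have hend : ρ (c j + (extract α (c j) (c (j + 1))).length) = ρ (c (j + 1)) := by
      rw [length_extract, Nat.add_sub_cancel' hle]
    have hrun : M.FinRunOn (extract α (c j) (c (j + 1))) fun i => ρ (c j + i) :=
      (M.finRunOn_extract _ _ _ _).2 fun i _ => hρ (c j + i)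
    by_cases hv : ∃ m, c j ≤ m ∧ m ≤ c (j + 1) ∧ ρ m ∈ M.F
    · obtain ⟨m, hm₁, hm₂, hmF⟩ := hv
      have h : (ρ (c j), ρ (c (j + 1))) ∈ (M.tp (extract α (c j) (c (j + 1)))).2 :=
        ⟨fun i => ρ (c j + i), rfl, hend,
          ⟨m - c j, by rw [length_extract]; omega, by simpa [Nat.add_sub_cancel' hm₁] using hmF⟩,
          hrun⟩
      rw [htp j] at h
      obtain ⟨π, h0, h1, hF, hr⟩ := h
      rw [length_extract] at h1 hF
      exact ⟨π, h0, h1, hr, fun _ => hF⟩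
    · have h : (ρ (c j), ρ (c (j + 1))) ∈ (M.tp (extract α (c j) (c (j + 1)))).1 :=
        ⟨fun i => ρ (c j + i), rfl, hend, hrun⟩
      rw [htp j] at h
      obtain ⟨π, h0, h1, hr⟩ := h
      rw [length_extract] at h1
      exact ⟨π, h0, h1, hr, fun h => absurd h hv⟩
  choose π h0 h1 hr hF using block
  obtain ⟨ρ', hρ'⟩ := hd.exists_glue π fun j => (h1 j).trans (h0 (j + 1)).symm
  refine ⟨ρ', ⟨?_, fun n => ?_⟩, fun n => ?_⟩
  · have := hρ' 0 0 (Nat.zero_le _)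
    rw [hd.zero, h0, hc.zero, hρ0] at this
    exact this
  · obtain ⟨j, hj₁, hj₂⟩ := hd.exists_block n
    obtain ⟨i, rfl⟩ := Nat.exists_eq_add_of_le hj₁
    have := (M.finRunOn_extract _ _ _ _).1 (hr j) i (by omega)
    rwa [← hρ' j i (by omega), ← hρ' j (i + 1) (by omega)] at this
  · -- A visit of `ρ` to `F` beyond `c (n + 1)` lies in a block of index at least `n + 1`.
    obtain ⟨m, hm, hmF⟩ := hinf (c (n + 1))
    obtain ⟨j, hj₁, hj₂⟩ := hc.exists_block m
    obtain ⟨i, hi, hiF⟩ := hF j ⟨m, hj₁, hj₂.le, hmF⟩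
    refine ⟨d j + i, ?_, by rwa [hρ' j i hi]⟩
    have hnj : n + 1 ≤ j := by
      by_contra hlt
      have := hc.mono (show j + 1 ≤ n + 1 by omega)
      omega
    have := hd.mono hnj
    have := hd.le n
    omega

/-- Membership in `U · V^ω`, as a single sequence of cuts whose first block is in `U` and whose
other blocks are in `V`. -/
theorem exists_cut_of_mem_cat {A : Type u} {U V : Set (List A)} {α : ℕ → A}
    (h : α ∈ cat U (omegaIter V)) :
    ∃ c, IsCut c ∧ extract α (c 0) (c 1) ∈ U ∧
      ∀ j, extract α (c (j + 1)) (c (j + 2)) ∈ V := by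
  obtain ⟨r, hr, ι, hι0, hι, hV⟩ := h
  let c : ℕ → ℕ := fun n => Nat.casesOn n 0 fun j => r + ι j
  have hlt : ∀ j, c (j + 1) < c (j + 2) := fun j =>
    Nat.add_lt_add_left (hι (Nat.lt_succ_self j)) r
  refine ⟨c, ⟨rfl, monotone_nat_of_le_succ fun j => ?_, hlt⟩, ?_, fun j => ?_⟩
  · cases j with
    | zero => exact Nat.zero_le _
    | succ j => exact (hlt j).le
  · simpa [c, hι0] using hr
  · convert hV j using 1
    simp only [extract, c]
    rw [Nat.add_sub_add_left]
    refine List.map_congr_left fun k _ => ?_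
    congr 1
    omega

/-- saturation: if `α` and `β` both lie in `U_{τ₀} · (U_τ)^ω`, where
`U_{τ₀}`, `U_τ` are the classes of words with transition profile `τ₀`, resp. `τ`,
then `α ∈ L(ℬ) ↔ β ∈ L(ℬ)`. In particular, for any two `∼_ℬ`-classes `U`, `V`,
the set `U · V^ω` is contained in `L(ℬ)` or disjoint from it. -/
theorem saturation {A : Type u} (M : SLA A)
    (τ₀ τ : Set (M.Q × M.Q) × Set (M.Q × M.Q)) (α β : ℕ → A)
    (hα : α ∈ cat {u | M.tp u = τ₀} (omegaIter {u | M.tp u = τ}))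
    (hβ : β ∈ cat {u | M.tp u = τ₀} (omegaIter {u | M.tp u = τ})) :
    (α ∈ M.buchiLang ↔ β ∈ M.buchiLang) := by
  obtain ⟨c, hc, hc0, hcs⟩ := exists_cut_of_mem_cat hα
  obtain ⟨d, hd, hd0, hds⟩ := exists_cut_of_mem_cat hβ
  have htp : ∀ j, M.tp (extract α (c j) (c (j + 1))) = M.tp (extract β (d j) (d (j + 1))) := by
    rintro (_ | j)
    · exact Eq.trans hc0 (Eq.symm hd0)
    · exact Eq.trans (hcs j) (Eq.symm (hds j))
  exact ⟨M.mem_buchiLang_of_cuts hc hd htp,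
    M.mem_buchiLang_of_cuts hd hc fun j => (htp j).symm⟩
end

section
/- Let ℬ be a set-labeled Büchi automaton over A. For every ω-word α : ℕ → A there exist transition profiles τ₀, τ of ℬ and a strictly increasing sequence of natural numbers i₀ < i₁ < i₂ < ⋯ with i₀ ≥ 1 such that tp(α(0)⋯α(i₀ − 1)) = τ₀ and tp(α(i_j)⋯α(i_{j+1} − 1)) = τ for all j ≥ 0. Consequently α ∈ U_{τ₀} · (U_τ)^ω, where U_{τ₀}, U_τ are the corresponding profile classes. -/
/-!
Ramsey's theorem is needed only for consecutive pairs of cut positions, which an ultrafilter gives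
directly. Fix a nonprincipal ultrafilter on `ℕ`. Since there are finitely many profiles, for each
`i` the profile of the segment `[i, j)` is equal to some constant `c i` for almost all `j`, and
`c i` is itself equal to some constant `τ` for almost all `i`. From any position `i` with
`c i = τ`, almost every `j` satisfies `j > i`, `c j = τ`, and the segment `[i, j)` has profile
`τ`; iterating the choice of such a `j` produces the factorization
(`exists_strictMono_consecutive_color`). The membership in `U_{τ₀} · (U_τ)^ω` then follows by
translating the cut positions by `ι 0`.
-/

universe u

/-- A function into a finite type is constant almost everywhere along an ultrafilter. -/
theorem eventually_eq_const_of_finite {X C : Type*} [Finite C] (U : Ultrafilter X) (f : X → C) :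
    ∃ c, ∀ᶠ x in (U : Filter X), f x = c := by
  obtain ⟨c, hc⟩ := (U.map f).eq_pure_of_finite
  refine ⟨c, ?_⟩
  have h : {c} ∈ U.map f := by rw [hc]; exact Ultrafilter.mem_pure.2 rfl
  exact h

/-- The weak form of the infinite Ramsey theorem in which only the pairs of consecutive terms of
the sequence are required to be monochromatic. -/
theorem exists_strictMono_consecutive_color {C : Type*} [Finite C] (col : ℕ → ℕ → C) :
    ∃ (τ : C) (ι : ℕ → ℕ), StrictMono ι ∧ 1 ≤ ι 0 ∧ ∀ j, col (ι j) (ι (j + 1)) = τ := by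
  let U : Ultrafilter ℕ := Filter.hyperfilter ℕ
  have hgt : ∀ i, ∀ᶠ j in (U : Filter ℕ), i < j := fun i =>
    (Filter.eventually_gt_atTop i).filter_mono Nat.hyperfilter_le_atTop
  choose c hc using fun i => eventually_eq_const_of_finite U (col i)
  obtain ⟨τ, hτ⟩ := eventually_eq_const_of_finite U c
  have step : ∀ i : {i // c i = τ}, ∃ j : {j // c j = τ}, i.1 < j.1 ∧ col i.1 j.1 = τ := by
    rintro ⟨i, hi⟩
    obtain ⟨j, hij, hj, hcol⟩ := ((hgt i).and (hτ.and (hc i))).exists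
    exact ⟨⟨j, hj⟩, hij, hcol.trans hi⟩
  choose next hlt hcol using step
  obtain ⟨s, hs, hsτ⟩ := ((hgt 0).and hτ).exists
  let seq : ℕ → {i // c i = τ} := fun n => Nat.rec ⟨s, hsτ⟩ (fun _ i => next i) n
  exact ⟨τ, fun n => (seq n).1, strictMono_nat_of_lt_succ fun n => hlt (seq n), hs,
    fun n => hcol (seq n)⟩

theorem extract_shift {A : Type u} (α : ℕ → A) {r i j : ℕ} (hi : r ≤ i) :
    extract (fun n => α (n + r)) (i - r) (j - r) = extract α i j := by
  unfold extract
  have h : j - r - (i - r) = j - i := by omega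
  rw [h]
  refine List.map_congr_left fun k _ => ?_
  have hidx : i - r + k + r = i + k := by omega
  simp only [hidx]

/-- Ramsey factorization: every ω-word admits a factorization
`α = α[0,i₀−1] · α[i₀,i₁−1] · α[i₁,i₂−1] ⋯` (with `i₀ ≥ 1`) in which the first
segment has some profile `τ₀` and all further segments share one profile `τ`;
consequently `α ∈ U_{τ₀} · (U_τ)^ω`. -/
theorem ramsey_factorization {A : Type u} (M : SLA A) (α : ℕ → A) :
    ∃ τ₀ τ : Set (M.Q × M.Q) × Set (M.Q × M.Q), ∃ ι : ℕ → ℕ,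
      StrictMono ι ∧ 1 ≤ ι 0 ∧
      M.tp (extract α 0 (ι 0)) = τ₀ ∧
      (∀ j, M.tp (extract α (ι j) (ι (j + 1))) = τ) ∧
      α ∈ cat {u | M.tp u = τ₀} (omegaIter {u | M.tp u = τ}) := by
  have := M.fin
  obtain ⟨τ, ι, hι, h0, hcol⟩ :=
    exists_strictMono_consecutive_color fun i j => M.tp (extract α i j)
  have hle : ∀ j, ι 0 ≤ ι j := fun j => hι.monotone (Nat.zero_le j)
  refine ⟨_, τ, ι, hι, h0, rfl, hcol, ι 0, rfl, fun j => ι j - ι 0, Nat.sub_self _, ?_, ?_⟩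
  · intro a b hab
    have := hι hab
    have := hle a
    dsimp only
    omega
  · intro j
    rw [extract_shift α (hle j)]
    exact hcol j
end

section
/- Let 𝒜 be a strong set-labeled Büchi automaton over A, and let τ₀, τ be strong transition profiles. Suppose α, β : ℕ → A both admit factorizations witnessing membership in W(τ₀, τ); that is, there are strictly increasing sequences i₀ < i₁ < ⋯ and k₀ < k₁ < ⋯ with i₀, k₀ ≥ 1 such that tp_α[0, i₀ − 1] = tp_β[0, k₀ − 1] = τ₀ and tp_α[i_j, i_{j+1} − 1] = tp_β[k_j, k_{j+1} − 1] = τ for all j. Then α ∈ L(𝒜) if and only if β ∈ L(𝒜). -/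
/-!
The initial profile `τ₀` and the profiles `τ` are treated uniformly by adding the cut point `0` in
front of each factorization, so that `α` and `β` are cut at `a 0 = 0 < a 1 < ⋯` and
`b 0 = 0 < b 1 < ⋯`, and the `n`-th segments have equal profiles for every `n`.

Let `ρ` be a successful run on `α`. On the `n`-th segment it goes from `ρ (a n)` to `ρ (a (n + 1))`,
so equality of profiles gives a run `σ n` on the `n`-th segment of `β` with the same endpoints, which
meets `F` whenever `ρ` does so on its `n`-th segment. Since consecutive `σ n` agree at the cut points,
they glue to a run on `β`. As `ρ` meets `F` in infinitely many segments, so does the glued run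
(`StrongSLA.mem_lang_of_stp_eq`). The converse is the same statement with `α` and `β` exchanged.
-/

universe u

/-- A strong set-labeled Büchi automaton over a (possibly infinite) alphabet `A`:
finitely many states, an initial state `q0`, a finite list of initial transitions
`(q0, φ, q)` (recorded as pairs `(φ, q)`, the source being `q0`) with `φ ⊆ A`,
a finite list of transitions `(p, ψ, q)` with `ψ ⊆ A × A` constraining the pair
(previous letter, current letter), and a set of accepting states. -/
structure StrongSLA (A : Type u) where
  Q : Type
  fin : Finite Q
  q0 : Q
  Δ0 : List (Set A × Q)
  Δ : List (Q × Set (A × A) × Q)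
  F : Set Q

namespace StrongSLA

variable {A : Type u}

/-- A run of `M` on the ω-word `α`. -/
def InfRun (M : StrongSLA A) (α : ℕ → A) (ρ : ℕ → M.Q) : Prop :=
  ρ 0 = M.q0 ∧ (∃ φ, (φ, ρ 1) ∈ M.Δ0 ∧ α 0 ∈ φ) ∧
    ∀ i, 1 ≤ i → ∃ ψ, (ρ i, ψ, ρ (i + 1)) ∈ M.Δ ∧ (α (i - 1), α i) ∈ ψ

/-- The ω-language accepted by `M` with the Büchi condition. -/
def lang (M : StrongSLA A) : Set (ℕ → A) :=
  {α | ∃ ρ, M.InfRun α ρ ∧ ∀ n, ∃ m, n ≤ m ∧ ρ m ∈ M.F}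

/-- `ρ` is a run of `M` from `p` to `q` on the segment `α[i, j]`:
states `ρ(i), …, ρ(j+1)`, each step `s` (for `i ≤ s ≤ j`) uses a transition
constrained by the pair `(α(s−1), α(s))`; for `s = 0` an initial transition
is used instead (so necessarily `p = q0` when `i = 0`). -/
def SegRun (M : StrongSLA A) (α : ℕ → A) (i j : ℕ) (p q : M.Q) (ρ : ℕ → M.Q) : Prop :=
  ρ i = p ∧ ρ (j + 1) = q ∧ (i = 0 → p = M.q0) ∧
    ∀ s, i ≤ s → s ≤ j →
      if s = 0 then ∃ φ, (φ, ρ 1) ∈ M.Δ0 ∧ α 0 ∈ φ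
      else ∃ ψ, (ρ s, ψ, ρ (s + 1)) ∈ M.Δ ∧ (α (s - 1), α s) ∈ ψ

/-- The strong transition profile `tp_α[i, j]`: the pair of sets of state pairs
`(p, q)` admitting a run on the segment `α[i, j]`, respectively admitting such a
run that visits an accepting state. -/
def stp (M : StrongSLA A) (α : ℕ → A) (i j : ℕ) :
    Set (M.Q × M.Q) × Set (M.Q × M.Q) :=
  ({pq | ∃ ρ, M.SegRun α i j pq.1 pq.2 ρ},
   {pq | ∃ ρ, M.SegRun α i j pq.1 pq.2 ρ ∧ ∃ s, i ≤ s ∧ s ≤ j + 1 ∧ ρ s ∈ M.F})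

/-- The set `W(τ₀, τ)` of ω-words admitting a factorization whose first segment
has strong profile `τ₀` and all further segments have strong profile `τ`. -/
def W (M : StrongSLA A) (τ₀ τ : Set (M.Q × M.Q) × Set (M.Q × M.Q)) : Set (ℕ → A) :=
  {α | ∃ ι : ℕ → ℕ, StrictMono ι ∧ 1 ≤ ι 0 ∧ M.stp α 0 (ι 0 - 1) = τ₀ ∧
    ∀ j, M.stp α (ι j) (ι (j + 1) - 1) = τ}

end StrongSLA

/-- An ω-language is recognized by a strong set-labeled Büchi automaton over `A`. -/
def StrongBuchiRecognizable (A : Type u) (L : Set (ℕ → A)) : Prop :=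
  ∃ M : StrongSLA A, M.lang = L

namespace StrongSLA

variable {A : Type u}

/-- A strictly increasing sequence starting at `0` cuts `ℕ` into half-open blocks. -/
lemma exists_block {b : ℕ → ℕ} (hb : StrictMono b) (h0 : b 0 = 0) (s : ℕ) :
    ∃ n, b n ≤ s ∧ s < b (n + 1) := by
  induction s with
  | zero => exact ⟨0, h0.le, h0.symm.trans_lt (hb Nat.zero_lt_one)⟩
  | succ s ih =>
    obtain ⟨n, h1, h2⟩ := ih
    by_cases h : s + 1 < b (n + 1)
    · exact ⟨n, by omega, h⟩
    · have := hb (Nat.lt_add_one (n + 1))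
      exact ⟨n + 1, by omega, by omega⟩

lemma block_unique {b : ℕ → ℕ} (hb : StrictMono b) {s m n : ℕ} (hm : b m ≤ s) (hm' : s < b (m + 1))
    (hn : b n ≤ s) (hn' : s < b (n + 1)) : m = n := by
  have h1 := hb.lt_iff_lt.1 (hm.trans_lt hn')
  have h2 := hb.lt_iff_lt.1 (hn.trans_lt hm')
  omega

/-- Functions on consecutive closed blocks that agree at the cut points glue to one function. -/
lemma exists_glue {X : Type*} {b : ℕ → ℕ} (hb : StrictMono b) (h0 : b 0 = 0) (σ : ℕ → ℕ → X)
    (hσ : ∀ n, σ n (b (n + 1)) = σ (n + 1) (b (n + 1))) :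
    ∃ ρ : ℕ → X, ∀ n s, b n ≤ s → s ≤ b (n + 1) → ρ s = σ n s := by
  choose idx hidx hidx' using exists_block hb h0
  refine ⟨fun s => σ (idx s) s, fun n s h1 h2 => ?_⟩
  rcases h2.lt_or_eq with h | rfl
  · simp only [block_unique hb (hidx s) (hidx' s) h1 h]
  · simp only [block_unique hb (hidx (b (n + 1))) (hidx' _) le_rfl (hb (Nat.lt_add_one (n + 1)))]
    exact (hσ n).symm

/-- The restriction of an infinite run to a segment is a run on that segment. -/
lemma InfRun.segRun {M : StrongSLA A} {α : ℕ → A} {ρ : ℕ → M.Q} (h : M.InfRun α ρ) (i j : ℕ) :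
    M.SegRun α i j (ρ i) (ρ (j + 1)) ρ := by
  refine ⟨rfl, rfl, fun hi => hi ▸ h.1, fun s _ _ => ?_⟩
  split_ifs with hs
  · exact h.2.1
  · exact h.2.2 s (by omega)

/-- Acceptance transfers along factorizations, with first cut point `0`, whose corresponding segments
have equal profiles. -/
lemma mem_lang_of_stp_eq (M : StrongSLA A) {α β : ℕ → A} {a b : ℕ → ℕ}
    (ha : StrictMono a) (ha0 : a 0 = 0) (hb : StrictMono b) (hb0 : b 0 = 0)
    (h : ∀ n, M.stp α (a n) (a (n + 1) - 1) = M.stp β (b n) (b (n + 1) - 1))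
    (hα : α ∈ M.lang) : β ∈ M.lang := by
  obtain ⟨ρ, hρ, hacc⟩ := hα
  have ha1 : ∀ n, a (n + 1) - 1 + 1 = a (n + 1) := fun n => by
    have := ha (Nat.lt_add_one n)
    omega
  have hb1 : ∀ n, b (n + 1) - 1 + 1 = b (n + 1) := fun n => by
    have := hb (Nat.lt_add_one n)
    omega
  have key : ∀ n, ∃ σ, M.SegRun β (b n) (b (n + 1) - 1) (ρ (a n)) (ρ (a (n + 1))) σ ∧
      ((∃ s, a n ≤ s ∧ s ≤ a (n + 1) ∧ ρ s ∈ M.F) →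
        ∃ s, b n ≤ s ∧ s ≤ b (n + 1) ∧ σ s ∈ M.F) := by
    intro n
    have hseg := hρ.segRun (a n) (a (n + 1) - 1)
    rw [ha1] at hseg
    by_cases hF : ∃ s, a n ≤ s ∧ s ≤ a (n + 1) ∧ ρ s ∈ M.F
    · have hmem : (ρ (a n), ρ (a (n + 1))) ∈ (M.stp α (a n) (a (n + 1) - 1)).2 :=
        ⟨ρ, hseg, by rwa [ha1]⟩
      rw [h n] at hmem
      obtain ⟨σ, hσ, hσF⟩ := hmem
      rw [hb1] at hσF
      exact ⟨σ, hσ, fun _ => hσF⟩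
    · have hmem : (ρ (a n), ρ (a (n + 1))) ∈ (M.stp α (a n) (a (n + 1) - 1)).1 := ⟨ρ, hseg⟩
      rw [h n] at hmem
      obtain ⟨σ, hσ⟩ := hmem
      exact ⟨σ, hσ, fun h' => absurd h' hF⟩
  choose σ hσ hσF using key
  have hend : ∀ n, σ n (b (n + 1)) = ρ (a (n + 1)) := fun n => by
    have := (hσ n).2.1
    rwa [hb1] at this
  obtain ⟨ρ', hρ'⟩ := exists_glue hb hb0 σ fun n => (hend n).trans (hσ (n + 1)).1.symm
  have hstep : ∀ s, if s = 0 then ∃ φ, (φ, ρ' 1) ∈ M.Δ0 ∧ β 0 ∈ φ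
      else ∃ ψ, (ρ' s, ψ, ρ' (s + 1)) ∈ M.Δ ∧ (β (s - 1), β s) ∈ ψ := by
    intro s
    obtain ⟨n, h1, h2⟩ := exists_block hb hb0 s
    have hs := (hσ n).2.2.2 s h1 (by omega)
    rw [← hρ' n s h1 h2.le, ← hρ' n (s + 1) (by omega) h2] at hs
    split_ifs at hs ⊢ with h0
    · subst h0
      rwa [← hρ' n 1 (by omega) h2] at hs
    · exact hs
  refine ⟨ρ', ⟨?_, by simpa using hstep 0, fun i hi => ?_⟩, fun N => ?_⟩
  · have h1 := hρ' 0 0 hb0.le (Nat.zero_le _)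
    have h2 := (hσ 0).1
    rw [hb0, ha0] at h2
    rw [h1, h2, hρ.1]
  · have := hstep i
    rwa [if_neg (by omega)] at this
  · obtain ⟨m, hm, hmF⟩ := hacc (a N)
    obtain ⟨n, h1, h2⟩ := exists_block ha ha0 m
    have hNn : N < n + 1 := ha.lt_iff_lt.1 (hm.trans_lt h2)
    obtain ⟨s, hs1, hs2, hsF⟩ := hσF n ⟨m, h1, h2.le, hmF⟩
    have hbn := hb.le_apply (x := n)
    exact ⟨s, by omega, by rwa [hρ' n s hs1 hs2]⟩

/-- The cut points of a factorization, with `0` added in front. -/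
def cuts (ι : ℕ → ℕ) : ℕ → ℕ
  | 0 => 0
  | n + 1 => ι n

lemma cuts_strictMono {ι : ℕ → ℕ} (hι : StrictMono ι) (h0 : 1 ≤ ι 0) : StrictMono (cuts ι) :=
  strictMono_nat_of_lt_succ fun n => by
    cases n with
    | zero => exact h0
    | succ n => exact hι (Nat.lt_add_one n)

lemma mem_lang_of_mem_W (M : StrongSLA A) {τ₀ τ : Set (M.Q × M.Q) × Set (M.Q × M.Q)} {α β : ℕ → A}
    (hα : α ∈ M.W τ₀ τ) (hβ : β ∈ M.W τ₀ τ) (h : α ∈ M.lang) : β ∈ M.lang := by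
  obtain ⟨ι, hι, hι0, hια, hιτ⟩ := hα
  obtain ⟨κ, hκ, hκ0, hκβ, hκτ⟩ := hβ
  refine M.mem_lang_of_stp_eq (cuts_strictMono hι hι0) rfl (cuts_strictMono hκ hκ0) rfl ?_ h
  intro n
  cases n with
  | zero => exact hια.trans hκβ.symm
  | succ n => exact (hιτ n).trans (hκτ n).symm

end StrongSLA

/-- saturation for strong Büchi automata: if `α` and `β` both admit
factorizations witnessing membership in `W(τ₀, τ)`, then `α ∈ L(𝒜) ↔ β ∈ L(𝒜)`. -/
theorem strong_saturation {A : Type u} (M : StrongSLA A)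
    (τ₀ τ : Set (M.Q × M.Q) × Set (M.Q × M.Q)) (α β : ℕ → A)
    (hα : α ∈ M.W τ₀ τ) (hβ : β ∈ M.W τ₀ τ) :
    (α ∈ M.lang ↔ β ∈ M.lang) :=
  ⟨M.mem_lang_of_mem_W hα hβ, M.mem_lang_of_mem_W hβ hα⟩
end

section
/- Let 𝒜 be a strong set-labeled Büchi automaton over A. Then the complement of L(𝒜) is the union, over all pairs of strong transition profiles (τ₀, τ) such that W(τ₀, τ) ∩ L(𝒜) = ∅, of the sets W(τ₀, τ); that is, {α : ℕ → A | α ∉ L(𝒜)} = ⋃ {W(τ₀, τ) | τ₀, τ strong profiles of 𝒜 with W(τ₀, τ) ∩ L(𝒜) = ∅}. -/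
/-!
Every ω-word `α` lies in some `W τ₀ τ`: there are finitely many profiles, so colouring each pair
`i < j` with the profile of `α[i, j - 1]` yields an infinite increasing sequence whose consecutive
segments all have the same profile (`exists_strictMono_consecutive_eq`).

On the other hand each `W τ₀ τ` is saturated by the language (`mem_lang_of_stp_eq`): if `α` and `β`
have factorizations with the same sequence of profiles, then a successful run on `α` can be cut at
the factorization points, each piece replaced by a piece on `β` with the same end states that
visits `F` whenever the original piece does, and the new pieces glued into a successful run on `β`.
So if `α` is not accepted, no word of the set `W τ₀ τ` containing it is accepted, which gives the
nontrivial inclusion.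
-/

universe u

/-- A weak infinite Ramsey theorem for finite colourings of pairs: only the colours of consecutive
elements of the sequence are controlled, and that is enough for factorizations. -/
theorem exists_strictMono_consecutive_eq {C : Type*} [Finite C] (c : ℕ → ℕ → C) :
    ∃ (g : ℕ → ℕ) (k : C), StrictMono g ∧ ∀ n, c (g n) (g (n + 1)) = k := by
  classical
  by_contra hcon
  push Not at hcon
  -- If no colour works, the colours can be avoided one after the other on a subsequence.
  have key : ∀ S : Set C, S.Finite →
      ∃ f : ℕ → ℕ, StrictMono f ∧ ∀ m n, m < n → c (f m) (f n) ∉ S := by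
    intro S hS
    induction S, hS using Set.Finite.induction_on with
    | empty => exact ⟨id, strictMono_id, by simp⟩
    | @insert a S _ _ ih =>
      obtain ⟨f, hf, hfS⟩ := ih
      obtain ⟨g, hg | hg⟩ := exists_increasing_or_nonincreasing_subseq' (fun x y => c x y = a) f
      · obtain ⟨n, hn⟩ := hcon (f ∘ g) a (hf.comp g.strictMono)
        exact absurd (hg n) hn
      · refine ⟨f ∘ g, hf.comp g.strictMono, fun m n hmn => ?_⟩
        rw [Set.mem_insert_iff, not_or]
        exact ⟨hg m n hmn, hfS _ _ (g.strictMono hmn)⟩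
  obtain ⟨f, -, hf⟩ := key Set.univ Set.finite_univ
  exact hf 0 1 Nat.zero_lt_one (Set.mem_univ _)

theorem exists_block {K : ℕ → ℕ} (hK : StrictMono K) (h0 : K 0 = 0) (s : ℕ) :
    ∃ j, K j ≤ s ∧ s < K (j + 1) := by
  induction s with
  | zero => exact ⟨0, h0.le, (Nat.zero_le _).trans_lt (hK Nat.zero_lt_one)⟩
  | succ s ih =>
    obtain ⟨j, h1, h2⟩ := ih
    by_cases h : s + 1 < K (j + 1)
    · exact ⟨j, by omega, h⟩
    · exact ⟨j + 1, by omega, lt_of_le_of_lt h2 (hK (Nat.lt_succ_self (j + 1)))⟩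

/-- Pieces on the blocks `[K j, K (j + 1)]` that agree at the common end points glue together. -/
theorem exists_glue {Q : Type*} {K : ℕ → ℕ} (hK : StrictMono K) (h0 : K 0 = 0) (σ : ℕ → ℕ → Q)
    (hσ : ∀ j, σ j (K (j + 1)) = σ (j + 1) (K (j + 1))) :
    ∃ ρ : ℕ → Q, ∀ j s, K j ≤ s → s ≤ K (j + 1) → ρ s = σ j s := by
  choose b hb1 hb2 using exists_block hK h0
  refine ⟨fun s => σ (b s) s, fun j s h1 h2 => ?_⟩
  have hlo : j < b s + 1 := hK.lt_iff_lt.mp (h1.trans_lt (hb2 s))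
  have hhi : b s ≤ j + 1 := hK.le_iff_le.mp ((hb1 s).trans h2)
  obtain h | h : b s = j ∨ b s = j + 1 := by omega
  · simp only [h]
  · have h3 := hb1 s
    rw [h] at h3
    obtain rfl : s = K (j + 1) := le_antisymm h2 h3
    simp only [h, hσ]

/-- Words with factorizations starting at `0` that have the same profiles are accepted together. -/
theorem mem_lang_of_stp_eq {A : Type u} (M : StrongSLA A) {α β : ℕ → A} {ι κ : ℕ → ℕ}
    (hι : StrictMono ι) (hκ : StrictMono κ) (hι0 : ι 0 = 0) (hκ0 : κ 0 = 0)
    (h : ∀ j, M.stp α (ι j) (ι (j + 1) - 1) = M.stp β (κ j) (κ (j + 1) - 1))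
    (hα : α ∈ M.lang) : β ∈ M.lang := by
  obtain ⟨ρ, ⟨hρ0, hρ1, hρ⟩, hF⟩ := hα
  have hιs : ∀ j, ι (j + 1) - 1 + 1 = ι (j + 1) := fun j => by
    have := hι (Nat.lt_add_one j); omega
  have hκs : ∀ j, κ (j + 1) - 1 + 1 = κ (j + 1) := fun j => by
    have := hκ (Nat.lt_add_one j); omega
  have hseg : ∀ j, M.SegRun α (ι j) (ι (j + 1) - 1) (ρ (ι j)) (ρ (ι (j + 1))) ρ := by
    intro j
    refine ⟨rfl, by rw [hιs], fun hj => by rw [hj, hρ0], fun s _ _ => ?_⟩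
    split_ifs with hs
    · exact hρ1
    · exact hρ s (by omega)
  -- If the piece of `ρ` visits `F`, the second profile component provides the new piece,
  -- otherwise the first one does.
  have hex : ∀ j, ∃ σ, M.SegRun β (κ j) (κ (j + 1) - 1) (ρ (ι j)) (ρ (ι (j + 1))) σ ∧
      ((∃ s, ι j ≤ s ∧ s ≤ ι (j + 1) ∧ ρ s ∈ M.F) →
        ∃ s, κ j ≤ s ∧ s ≤ κ (j + 1) ∧ σ s ∈ M.F) := by
    intro j
    by_cases hv : ∃ s, ι j ≤ s ∧ s ≤ ι (j + 1) ∧ ρ s ∈ M.F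
    · have hm : (ρ (ι j), ρ (ι (j + 1))) ∈ (M.stp α (ι j) (ι (j + 1) - 1)).2 :=
        ⟨ρ, hseg j, by rw [hιs]; exact hv⟩
      rw [h j] at hm
      obtain ⟨σ, h1, h2⟩ := hm
      rw [hκs] at h2
      exact ⟨σ, h1, fun _ => h2⟩
    · have hm : (ρ (ι j), ρ (ι (j + 1))) ∈ (M.stp α (ι j) (ι (j + 1) - 1)).1 := ⟨ρ, hseg j⟩
      rw [h j] at hm
      obtain ⟨σ, h1⟩ := hm
      exact ⟨σ, h1, fun h' => absurd h' hv⟩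
  choose σ hσ hσF using hex
  obtain ⟨π, hπ⟩ := exists_glue hκ hκ0 σ (fun j => by
    have h1 := (hσ j).2.1
    rw [hκs] at h1
    rw [h1, (hσ (j + 1)).1])
  have hstep : ∀ s, if s = 0 then ∃ φ, (φ, π 1) ∈ M.Δ0 ∧ β 0 ∈ φ
      else ∃ ψ, (π s, ψ, π (s + 1)) ∈ M.Δ ∧ (β (s - 1), β s) ∈ ψ := by
    intro s
    obtain ⟨j, h1, h2⟩ := exists_block hκ hκ0 s
    have h3 := (hσ j).2.2.2 s h1 (by omega)
    have h4 := hπ j (s + 1) (by omega) (by omega)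
    rw [hπ j s h1 h2.le, h4]
    split_ifs with hs
    · subst hs
      rw [if_pos rfl] at h3
      rw [Nat.zero_add] at h4
      rwa [h4]
    · rwa [if_neg hs] at h3
  refine ⟨π, ⟨?_, by simpa using hstep 0, fun i hi => ?_⟩, fun n => ?_⟩
  · have h1 := (hσ 0).1
    rw [hκ0] at h1
    rw [hπ 0 0 hκ0.le (Nat.zero_le _), h1, hι0, hρ0]
  · have := hstep i
    rwa [if_neg (by omega)] at this
  · -- A visit to `F` after position `ι n` lies in a block with index at least `n`.
    obtain ⟨m, hm, hmF⟩ := hF (ι n)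
    obtain ⟨j, h1, h2⟩ := exists_block hι hι0 m
    have hnj : n < j + 1 := hι.lt_iff_lt.mp (hm.trans_lt h2)
    obtain ⟨s, hs1, hs2, hs3⟩ := hσF j ⟨m, h1, h2.le, hmF⟩
    have := hκ.le_apply (x := j)
    exact ⟨s, by omega, by rwa [hπ j s hs1 hs2]⟩

/-- Prepends the position `0` to a factorization, turning its initial segment into a block. -/
def prependZero (ι : ℕ → ℕ) : ℕ → ℕ
  | 0 => 0
  | n + 1 => ι n

theorem prependZero_strictMono {ι : ℕ → ℕ} (hι : StrictMono ι) (h : 1 ≤ ι 0) :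
    StrictMono (prependZero ι) := by
  refine strictMono_nat_of_lt_succ fun n => ?_
  cases n with
  | zero => exact h
  | succ n => exact hι (Nat.lt_succ_self n)

theorem mem_lang_of_mem_W {A : Type u} (M : StrongSLA A)
    {τ₀ τ : Set (M.Q × M.Q) × Set (M.Q × M.Q)} {α β : ℕ → A}
    (hα : α ∈ M.W τ₀ τ) (hβ : β ∈ M.W τ₀ τ) (h : α ∈ M.lang) : β ∈ M.lang := by
  obtain ⟨ι, hι, hι1, hι0, hιτ⟩ := hα
  obtain ⟨κ, hκ, hκ1, hκ0, hκτ⟩ := hβ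
  refine mem_lang_of_stp_eq M (prependZero_strictMono hι hι1) (prependZero_strictMono hκ hκ1)
    rfl rfl (fun j => ?_) h
  cases j with
  | zero => exact hι0.trans hκ0.symm
  | succ j => exact (hιτ j).trans (hκτ j).symm

theorem exists_mem_W {A : Type u} (M : StrongSLA A) (α : ℕ → A) :
    ∃ τ₀ τ, α ∈ M.W τ₀ τ := by
  have := M.fin
  -- The shift by one keeps the first factorization point positive.
  obtain ⟨g, τ, hg, hτ⟩ := exists_strictMono_consecutive_eq (fun i j => M.stp α (i + 1) (j + 1 - 1))
  exact ⟨_, τ, fun n => g n + 1, fun _ _ h => Nat.succ_lt_succ (hg h), Nat.le_add_left _ _, rfl, hτ⟩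

/-- the complement of the ω-language of a strong set-labeled Büchi
automaton is the union of the sets `W(τ₀, τ)` over all pairs of strong profiles
`(τ₀, τ)` with `W(τ₀, τ) ∩ L(𝒜) = ∅`. -/
theorem strong_complement_as_union {A : Type u} (M : StrongSLA A) :
    {α : ℕ → A | α ∉ M.lang} =
      ⋃ (τ₀ : Set (M.Q × M.Q) × Set (M.Q × M.Q)),
        ⋃ (τ : Set (M.Q × M.Q) × Set (M.Q × M.Q)),
          ⋃ (_ : M.W τ₀ τ ∩ M.lang = ∅), M.W τ₀ τ := by
  ext α
  simp only [Set.mem_ofPred_eq, Set.mem_iUnion, exists_prop]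
  constructor
  · intro hα
    obtain ⟨τ₀, τ, hW⟩ := exists_mem_W M α
    refine ⟨τ₀, τ, Set.eq_empty_iff_forall_notMem.mpr ?_, hW⟩
    rintro β ⟨hβ, hβL⟩
    exact hα (mem_lang_of_mem_W M hβ hW hβL)
  · rintro ⟨τ₀, τ, hE, hW⟩ hα
    exact Set.eq_empty_iff_forall_notMem.mp hE α ⟨hW, hα⟩
end

section
/- The class of ω-languages over A recognized by strong set-labeled Büchi automata is closed under union and complementation: if L₁, L₂ ⊆ (ℕ → A) are each recognized by some strong set-labeled Büchi automaton over A, then so are L₁ ∪ L₂ and {α : ℕ → A | α ∉ L₁}. -/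
/-!
The only thing a strong set-labeled automaton sees of an ω-word `α` is, at each position `i`, the
relation on states allowed by the pair (previous letter, current letter). Since the labels are
arbitrary sets, recognizability can be restated without lists and labels: a finite state set, a set
of initial states, and for each (optional previous letter, current letter) an arbitrary step
relation (`RelRecognizable`). In this form union is the disjoint sum of automata.

Complementation is Büchi's argument. The profile of a segment records which states are connected by
a path over the segment, and whether such a path enters an accepting state. There are finitely many
profiles, so Ramsey's theorem (`exists_homogeneous_cuts`) factors the positions into a first segment
with profile `g` and further segments with one common profile `τ`. Whether the word is accepted
depends only on `(g, τ)` (`exists_acc_iff`). An automaton for the complement guesses a pair `(g, τ)`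
that does not allow an accepting path, guesses the cut points, and verifies the guess by computing
the profile of the current segment (`compl_run_sound`, `compl_run_complete`).
-/

universe u

namespace StrongBuchi

/-! ### Runs along a sequence of step relations -/

/-- `ρ` is an accepting path along the step relations `R 0, R 1, …`: it starts in `I` and visits `F`
infinitely often. -/
def Acc {Q : Type} (I : Q → Prop) (R : ℕ → Q → Q → Prop) (F : Q → Prop) (ρ : ℕ → Q) : Prop :=
  I (ρ 0) ∧ (∀ i, R i (ρ i) (ρ (i + 1))) ∧ ∀ n, ∃ m, n ≤ m ∧ F (ρ m)

/-- The letter before position `i`, if there is one. -/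
def prev {A : Type u} (α : ℕ → A) : ℕ → Option A
  | 0 => none
  | i + 1 => some (α i)

/-- Recognizability by a finite automaton whose step relation depends arbitrarily on the previous
letter (`none` at position `0`) and the current letter. -/
def RelRecognizable (A : Type u) (L : Set (ℕ → A)) : Prop :=
  ∃ (S : Type) (_ : Finite S) (I : S → Prop) (T : Option A → A → S → S → Prop) (F : S → Prop),
    ∀ α, α ∈ L ↔ ∃ ρ, Acc I (fun i => T (prev α i) (α i)) F ρ

/-- The step relation of a strong set-labeled automaton. -/
def stepRel {A : Type u} (M : StrongSLA A) : Option A → A → M.Q → M.Q → Prop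
  | none, a, _, q => ∃ φ, (φ, q) ∈ M.Δ0 ∧ a ∈ φ
  | some a, b, p, q => ∃ ψ, (p, ψ, q) ∈ M.Δ ∧ (a, b) ∈ ψ

theorem relRecognizable_of {A : Type u} {L : Set (ℕ → A)} (h : StrongBuchiRecognizable A L) :
    RelRecognizable A L := by
  obtain ⟨M, rfl⟩ := h
  refine ⟨M.Q, M.fin, fun q => q = M.q0, stepRel M, fun q => q ∈ M.F, fun α => ?_⟩
  constructor
  · rintro ⟨ρ, ⟨h0, h1, h2⟩, hF⟩
    refine ⟨ρ, h0, fun i => ?_, hF⟩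
    cases i with
    | zero => exact h1
    | succ i => exact h2 (i + 1) (by omega)
  · rintro ⟨ρ, h0, h1, hF⟩
    refine ⟨ρ, ⟨h0, h1 0, fun i hi => ?_⟩, hF⟩
    obtain ⟨i, rfl⟩ : ∃ k, i = k + 1 := ⟨i - 1, by omega⟩
    exact h1 (i + 1)

/-- A fresh initial state `none` turns a set of initial states into a single one; the labels are the
sets of letters (pairs of letters) allowing the step in question. -/
theorem of_relRecognizable {A : Type u} {L : Set (ℕ → A)} (h : RelRecognizable A L) :
    StrongBuchiRecognizable A L := by
  obtain ⟨S, hS, I, T, F, hL⟩ := h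
  have : Fintype S := Fintype.ofFinite S
  let M : StrongSLA A :=
    { Q := Option S
      fin := inferInstance
      q0 := none
      Δ0 := (Finset.univ : Finset S).toList.map
        fun s => ({a | ∃ s0, I s0 ∧ T none a s0 s}, some s)
      Δ := (Finset.univ : Finset (S × S)).toList.map
        fun x => (some x.1, {ab | T (some ab.1) ab.2 x.1 x.2}, some x.2)
      F := {x | ∃ s, x = some s ∧ F s} }
  refine ⟨M, ?_⟩
  ext α
  rw [hL]
  constructor
  · rintro ⟨ρ, ⟨h0, ⟨φ, h1, h1'⟩, h2⟩, hF⟩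
    have hsome : ∀ i, ∃ s, ρ (i + 1) = some s := by
      intro i
      cases i with
      | zero =>
        simp only [M, List.mem_map, Prod.mk.injEq] at h1
        obtain ⟨s, -, -, hs⟩ := h1
        exact ⟨s, hs.symm⟩
      | succ i =>
        obtain ⟨ψ, h3, -⟩ := h2 (i + 1) (by omega)
        simp only [M, List.mem_map, Prod.mk.injEq] at h3
        obtain ⟨s, -, -, -, hs⟩ := h3
        exact ⟨s.2, hs.symm⟩
    choose σ hσ using hsome
    have h1s : ∃ s0, I s0 ∧ T none (α 0) s0 (σ 0) := by
      simp only [M, List.mem_map, Prod.mk.injEq] at h1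
      obtain ⟨s, -, hφ, hs⟩ := h1
      have : s = σ 0 := Option.some.inj (hs.trans (hσ 0))
      subst this
      rw [← hφ] at h1'
      exact h1'
    obtain ⟨s0, hI, hT⟩ := h1s
    refine ⟨fun i => Nat.casesOn i s0 σ, hI, fun i => ?_, fun n => ?_⟩
    · cases i with
      | zero => exact hT
      | succ i =>
        obtain ⟨ψ, h3, h4⟩ := h2 (i + 1) (by omega)
        simp only [M, List.mem_map, Prod.mk.injEq] at h3
        obtain ⟨⟨s, t⟩, -, hs, hψ, ht⟩ := h3
        have e1 : s = σ i := Option.some.inj (hs.trans (hσ i))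
        have e2 : t = σ (i + 1) := Option.some.inj (ht.trans (hσ (i + 1)))
        subst e1 e2
        rw [← hψ] at h4
        exact h4
    · obtain ⟨m, hm, s, hs, hFs⟩ := hF (n + 1)
      obtain ⟨m, rfl⟩ : ∃ k, m = k + 1 := ⟨m - 1, by omega⟩
      have e : σ m = s := Option.some.inj ((hσ m).symm.trans hs)
      subst e
      exact ⟨m + 1, by omega, hFs⟩
  · rintro ⟨ρ, h0, h1, hF⟩
    refine ⟨fun i => Nat.casesOn i none fun i => some (ρ (i + 1)),
      ⟨rfl, ⟨{a | ∃ s0, I s0 ∧ T none a s0 (ρ 1)}, ?_, ρ 0, h0, h1 0⟩, fun i hi => ?_⟩,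
      fun n => ?_⟩
    · simp only [M, List.mem_map]
      exact ⟨ρ 1, by simp, rfl⟩
    · obtain ⟨i, rfl⟩ : ∃ k, i = k + 1 := ⟨i - 1, by omega⟩
      refine ⟨{ab | T (some ab.1) ab.2 (ρ (i + 1)) (ρ (i + 1 + 1))}, ?_, h1 (i + 1)⟩
      simp only [M, List.mem_map]
      exact ⟨(ρ (i + 1), ρ (i + 1 + 1)), by simp, rfl⟩
    · obtain ⟨m, hm, hFm⟩ := hF (n + 1)
      obtain ⟨m, rfl⟩ : ∃ k, m = k + 1 := ⟨m - 1, by omega⟩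
      exact ⟨m + 1, by omega, ρ (m + 1), rfl, hFm⟩

/-! ### Union -/

theorem RelRecognizable.union {A : Type u} {L₁ L₂ : Set (ℕ → A)} (h₁ : RelRecognizable A L₁)
    (h₂ : RelRecognizable A L₂) : RelRecognizable A (L₁ ∪ L₂) := by
  obtain ⟨S₁, hS₁, I₁, T₁, F₁, hL₁⟩ := h₁
  obtain ⟨S₂, hS₂, I₂, T₂, F₂, hL₂⟩ := h₂
  refine ⟨S₁ ⊕ S₂, inferInstance, Sum.elim I₁ I₂,
    fun a b => Sum.LiftRel (T₁ a b) (T₂ a b), Sum.elim F₁ F₂, fun α => ?_⟩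
  rw [Set.mem_union, hL₁, hL₂]
  constructor
  · rintro (⟨ρ, h0, h1, hF⟩ | ⟨ρ, h0, h1, hF⟩)
    · exact ⟨fun i => .inl (ρ i), h0, fun i => .inl (h1 i), hF⟩
    · exact ⟨fun i => .inr (ρ i), h0, fun i => .inr (h1 i), hF⟩
  · rintro ⟨ρ, h0, h1, hF⟩
    -- A step never leaves its summand, so the whole run stays in the summand of `ρ 0`.
    rcases hρ : ρ 0 with s | s
    · left
      have key : ∀ i, ∃ s, ρ i = .inl s := by
        intro i
        induction i with
        | zero => exact ⟨s, hρ⟩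
        | succ i ih =>
          obtain ⟨s, hs⟩ := ih
          have := h1 i
          rw [hs] at this
          rcases hn : ρ (i + 1) with t | t
          · exact ⟨t, rfl⟩
          · rw [hn] at this; cases this
      choose σ hσ using key
      obtain rfl : ρ = fun i => .inl (σ i) := funext hσ
      exact ⟨σ, h0, fun i => Sum.liftRel_inl_inl.1 (h1 i), hF⟩
    · right
      have key : ∀ i, ∃ s, ρ i = .inr s := by
        intro i
        induction i with
        | zero => exact ⟨s, hρ⟩
        | succ i ih =>
          obtain ⟨s, hs⟩ := ih
          have := h1 i
          rw [hs] at this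
          rcases hn : ρ (i + 1) with t | t
          · rw [hn] at this; cases this
          · exact ⟨t, rfl⟩
      choose σ hσ using key
      obtain rfl : ρ = fun i => .inr (σ i) := funext hσ
      exact ⟨σ, h0, fun i => Sum.liftRel_inr_inr.1 (h1 i), hF⟩

/-! ### Profiles of segments -/

/-- A profile: the triple `(p, b, q)` stands for a path from `p` to `q`, where `b` tells whether an
accepting state occurs on it, the first state `p` not being counted. -/
abbrev Profile (Q : Type) := Set (Q × Prop × Q)

/-- The profile of the empty segment. -/
def idProf (Q : Type) : Profile Q := {x | x.1 = x.2.2 ∧ ¬ x.2.1}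

/-- The profile of a segment extended by one step. -/
def extProf {Q : Type} (F : Q → Prop) (τ : Profile Q) (R : Q → Q → Prop) : Profile Q :=
  {x | ∃ r c, (x.1, c, r) ∈ τ ∧ R r x.2.2 ∧ (x.2.1 ↔ c ∨ F x.2.2)}

/-- The profile of the segment of length `n` starting at position `i`. -/
def prof {Q : Type} (F : Q → Prop) (R : ℕ → Q → Q → Prop) (i : ℕ) : ℕ → Profile Q
  | 0 => idProf Q
  | n + 1 => extProf F (prof F R i n) (R (i + n))

theorem mem_prof {Q : Type} {F : Q → Prop} {R : ℕ → Q → Q → Prop} {ρ : ℕ → Q}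
    (h : ∀ i, R i (ρ i) (ρ (i + 1))) (i n : ℕ) :
    (ρ i, (∃ m, i < m ∧ m ≤ i + n ∧ F (ρ m)), ρ (i + n)) ∈ prof F R i n := by
  induction n with
  | zero =>
    refine ⟨rfl, ?_⟩
    rintro ⟨m, h1, h2, -⟩
    omega
  | succ n ih =>
    refine ⟨_, _, ih, h (i + n), ?_⟩
    constructor
    · rintro ⟨m, h1, h2, h3⟩
      by_cases hm : m ≤ i + n
      · exact .inl ⟨m, h1, hm, h3⟩
      · obtain rfl : m = i + (n + 1) := by omega
        exact .inr h3
    · rintro (⟨m, h1, h2, h3⟩ | h3)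
      · exact ⟨m, h1, by omega, h3⟩
      · exact ⟨i + (n + 1), by omega, le_rfl, h3⟩

theorem exists_of_mem_prof {Q : Type} {F : Q → Prop} {R : ℕ → Q → Q → Prop} (i n : ℕ) :
    ∀ (p : Q) (b : Prop) (q : Q), (p, b, q) ∈ prof F R i n →
      ∃ ρ : ℕ → Q, ρ i = p ∧ ρ (i + n) = q ∧
        (∀ m, i ≤ m → m < i + n → R m (ρ m) (ρ (m + 1))) ∧
        (b → ∃ m, i < m ∧ m ≤ i + n ∧ F (ρ m)) := by
  induction n with
  | zero =>
    rintro p b q ⟨h1, h2⟩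
    exact ⟨fun _ => p, rfl, h1, fun m _ _ => by omega, fun hb => absurd hb h2⟩
  | succ n ih =>
    rintro p b q ⟨r, c, h1, h2, h3⟩
    obtain ⟨ρ, e1, e2, e3, e4⟩ := ih p c r h1
    refine ⟨fun m => if m ≤ i + n then ρ m else q, by simp [e1], ?_, ?_, ?_⟩
    · simp
    · intro m hm hm'
      by_cases hc : m < i + n
      · have h5 : m + 1 ≤ i + n := hc
        simpa [hc.le, h5] using e3 m hm hc
      · obtain rfl : m = i + n := by omega
        simpa [e2] using h2
    · intro hb
      rcases h3.1 hb with hc | hF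
      · obtain ⟨m, f1, f2, f3⟩ := e4 hc
        exact ⟨m, f1, by omega, by simpa [f2] using f3⟩
      · exact ⟨i + (n + 1), by omega, le_rfl, by simpa using hF⟩

/-! ### Factorizations -/

/-- A strictly increasing sequence of cuts starting at `0` comes with the map sending a position to
the index of its segment. -/
theorem exists_index {ι : ℕ → ℕ} (hι : StrictMono ι) (h0 : ι 0 = 0) :
    ∃ k : ℕ → ℕ, k 0 = 0 ∧ (∀ j, k (ι j) = j) ∧ (∀ i, ι (k i) ≤ i ∧ i < ι (k i + 1)) ∧
      ∀ i, (i + 1 < ι (k i + 1) ∧ k (i + 1) = k i) ∨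
        (i + 1 = ι (k i + 1) ∧ k (i + 1) = k i + 1) := by
  have hex : ∀ i, ∃ k, ι k ≤ i ∧ i < ι (k + 1) := by
    intro i
    induction i with
    | zero => exact ⟨0, h0.le, h0.symm.trans_lt (hι Nat.zero_lt_one)⟩
    | succ i ih =>
      obtain ⟨k, h1, h2⟩ := ih
      by_cases h : i + 1 < ι (k + 1)
      · exact ⟨k, by omega, h⟩
      · exact ⟨k + 1, by omega, by have := hι (Nat.lt_add_one (k + 1)); omega⟩
  have huniq : ∀ i k l, ι k ≤ i → i < ι (k + 1) → ι l ≤ i → i < ι (l + 1) → k = l := by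
    intro i k l h1 h2 h3 h4
    have a := hι.lt_iff_lt.1 (lt_of_le_of_lt h1 h4)
    have b := hι.lt_iff_lt.1 (lt_of_le_of_lt h3 h2)
    omega
  choose k hk using hex
  refine ⟨k, ?_, ?_, hk, ?_⟩
  · exact huniq 0 _ _ (hk 0).1 (hk 0).2 h0.le (h0.symm.trans_lt (hι Nat.zero_lt_one))
  · exact fun j => huniq (ι j) _ _ (hk _).1 (hk _).2 le_rfl (hι (Nat.lt_add_one j))
  · intro i
    have h := hk i
    have h' := hk (i + 1)
    by_cases hc : i + 1 < ι (k i + 1)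
    · exact .inl ⟨hc, huniq (i + 1) _ _ h'.1 h'.2 (by omega) hc⟩
    · refine .inr ⟨by omega, huniq (i + 1) _ _ h'.1 h'.2 (by omega) ?_⟩
      have := hι (Nat.lt_add_one (k i + 1))
      omega

/-- There is an accepting path through the sequence of profiles `t 0, t 1, …`. -/
def ProfAcc {Q : Type} (I : Q → Prop) (t : ℕ → Profile Q) : Prop :=
  ∃ (q : ℕ → Q) (b : ℕ → Prop), I (q 0) ∧ (∀ j, (q j, b j, q (j + 1)) ∈ t j) ∧
    ∀ n, ∃ m, n ≤ m ∧ b m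

/-- Acceptance depends only on the profiles of the segments of a factorization. -/
theorem exists_acc_iff {Q : Type} {I : Q → Prop} {R : ℕ → Q → Q → Prop} {F : Q → Prop}
    {ι : ℕ → ℕ} (hι : StrictMono ι) (h0 : ι 0 = 0) :
    (∃ ρ, Acc I R F ρ) ↔ ProfAcc I (fun j => prof F R (ι j) (ι (j + 1) - ι j)) := by
  have hadd : ∀ j, ι j + (ι (j + 1) - ι j) = ι (j + 1) := fun j => by
    have := hι (Nat.lt_add_one j)
    omega
  obtain ⟨k, hk0, hkι, hk, hstep⟩ := exists_index hι h0
  constructor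
  · rintro ⟨ρ, hI, hR, hF⟩
    refine ⟨fun j => ρ (ι j), fun j => ∃ m, ι j < m ∧ m ≤ ι (j + 1) ∧ F (ρ m), by simpa [h0],
      fun j => ?_, fun n => ?_⟩
    · have := mem_prof (F := F) hR (ι j) (ι (j + 1) - ι j)
      rwa [hadd] at this
    · obtain ⟨m, hm, hFm⟩ := hF (ι n + 1)
      -- Segments are half-open on the left, so the position `m` is located through `m - 1`.
      obtain ⟨m, rfl⟩ : ∃ l, m = l + 1 := ⟨m - 1, by omega⟩
      have h1 := hk m
      refine ⟨k m, ?_, m + 1, by omega, by omega, hFm⟩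
      have := hι.lt_iff_lt.1 (show ι n < ι (k m + 1) by omega)
      omega
  · rintro ⟨q, b, hI, hq, hb⟩
    choose σ s1 s2 s3 s4 using fun j => exists_of_mem_prof _ _ _ _ _ (hq j)
    simp only [hadd] at s2 s3 s4
    have hsucc : ∀ i, σ (k (i + 1)) (i + 1) = σ (k i) (i + 1) := by
      intro i
      rcases hstep i with ⟨-, h2⟩ | ⟨h1, h2⟩
      · rw [h2]
      · rw [h2, h1, s1, s2]
    refine ⟨fun i => σ (k i) i, ?_, fun i => ?_, fun n => ?_⟩
    · have := s1 0
      rw [h0] at this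
      simpa only [hk0, this] using hI
    · simp only [hsucc]
      exact s3 _ _ (hk i).1 (hk i).2
    · obtain ⟨j, hj, hbj⟩ := hb n
      obtain ⟨m, h1, h2, h3⟩ := s4 j hbj
      have := hι.le_apply (x := j)
      refine ⟨m, by omega, ?_⟩
      obtain ⟨m, rfl⟩ : ∃ l, m = l + 1 := ⟨m - 1, by omega⟩
      have hkm : k m = j := by
        have a := hι.lt_iff_lt.1 (show ι j < ι (k m + 1) by have := (hk m).2; omega)
        have c := hι.lt_iff_lt.1 (show ι (k m) < ι (j + 1) by have := (hk m).1; omega)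
        omega
      simpa only [hsucc, hkm] using h3

/-- Ramsey's theorem for pairs, for consecutive elements of the homogeneous sequence. The colour `τ`
is the iterated limit of `c i j` along a nonprincipal ultrafilter. -/
theorem exists_homogeneous_cuts {C : Type} [Finite C] (c : ℕ → ℕ → C) :
    ∃ (ι : ℕ → ℕ) (τ : C), StrictMono ι ∧ ι 0 = 0 ∧ ∀ j, c (ι (j + 1)) (ι (j + 2)) = τ := by
  let U : Ultrafilter ℕ := Filter.hyperfilter ℕ
  have hlim : ∀ f : ℕ → C, ∃ t, ∀ᶠ j in (U : Filter ℕ), f j = t := by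
    intro f
    have : ∀ᶠ j in (U : Filter ℕ), ∃ t, f j = t := Filter.Eventually.of_forall fun j => ⟨_, rfl⟩
    exact Ultrafilter.eventually_exists_iff.1 this
  have hgt : ∀ n, ∀ᶠ j in (U : Filter ℕ), n < j := by
    intro n
    have h : (U : Filter ℕ) ≤ Filter.atTop := Nat.hyperfilter_le_atTop
    exact h (Filter.eventually_gt_atTop n)
  choose l hl using fun i => hlim (c i)
  obtain ⟨τ, hτ⟩ := hlim l
  have hnext : ∀ i, ∃ j, i < j ∧ l j = τ ∧ c i j = l i := fun i =>
    ((hgt i).and (hτ.and (hl i))).exists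
  choose nx h1 h2 h3 using hnext
  refine ⟨fun j => nx^[j] 0, τ, strictMono_nat_of_lt_succ fun j => ?_, rfl, fun j => ?_⟩
  · simp only [Function.iterate_succ_apply']
    exact h1 _
  · simp only [Function.iterate_succ_apply']
    rw [h3, h2]

/-! ### Complementation -/

/-- The profile sequence `g, τ, τ, …`. -/
def target {Q : Type} (g τ : Profile Q) : ℕ → Profile Q
  | 0 => g
  | _ + 1 => τ

/-- A state of the complement automaton. -/
structure CState (Q : Type) where
  /-- the guessed profile of the current segment -/
  goal : Profile Q
  /-- the guessed profile of all later segments -/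
  later : Profile Q
  /-- the profile of the part of the current segment read so far -/
  cur : Profile Q
  /-- whether the last step ended a segment -/
  cut : Prop

instance {Q : Type} [Finite Q] : Finite (CState Q) :=
  Finite.of_injective (fun s : CState Q => (s.goal, s.later, s.cur, s.cut)) (by
    rintro ⟨⟩ ⟨⟩ h
    simpa using h)

/-- Initial states of the complement automaton: a guess of two profiles that admit no accepting
path. -/
def cInit {Q : Type} (I : Q → Prop) (s : CState Q) : Prop :=
  ¬ ProfAcc I (target s.goal s.later) ∧ s.cur = idProf Q

/-- A step of the complement automaton extends the current segment; it may end the segment there,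
provided the resulting profile is the guessed one. -/
def cStep {Q : Type} (F : Q → Prop) (R : Q → Q → Prop) (s t : CState Q) : Prop :=
  t.later = s.later ∧
    ((¬ t.cut ∧ t.goal = s.goal ∧ t.cur = extProf F s.cur R) ∨
      (t.cut ∧ s.goal = extProf F s.cur R ∧ t.goal = s.later ∧ t.cur = idProf Q))

theorem compl_run_sound {Q : Type} {I : Q → Prop} {R : ℕ → Q → Q → Prop} {F : Q → Prop}
    {σ : ℕ → CState Q} (hσ : Acc (cInit I) (fun i => cStep F (R i)) CState.cut σ) :
    ¬ ∃ ρ, Acc I R F ρ := by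
  obtain ⟨⟨hbad, hcur0⟩, hstep, hcut⟩ := hσ
  have hnext : ∀ i, ∃ j, i < j ∧ (σ j).cut ∧ ∀ m, i < m → m < j → ¬ (σ m).cut := by
    classical
    intro i
    have hex : ∃ j, i < j ∧ (σ j).cut := by
      obtain ⟨j, h1, h2⟩ := hcut (i + 1)
      exact ⟨j, h1, h2⟩
    exact ⟨Nat.find hex, (Nat.find_spec hex).1, (Nat.find_spec hex).2,
      fun m h1 h2 h3 => Nat.find_min hex h2 ⟨h1, h3⟩⟩
  choose nx n1 n2 n3 using hnext
  have hlater : ∀ i, (σ i).later = (σ 0).later := by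
    intro i
    induction i with
    | zero => rfl
    | succ i ih => rw [(hstep i).1, ih]
  have hcut' : ∀ i, (σ i).cut → (σ i).cur = idProf Q := by
    intro i hi
    cases i with
    | zero => exact hcur0
    | succ i =>
      rcases (hstep i).2 with h | h
      · exact absurd hi h.1
      · exact h.2.2.2
  -- Between two cuts the automaton keeps its goal and computes the profile.
  have hseg : ∀ i, (σ i).cur = idProf Q → ∀ n, i + n < nx i →
      (σ (i + n)).goal = (σ i).goal ∧ (σ (i + n)).cur = prof F R i n := by
    intro i hi n
    induction n with
    | zero => exact fun _ => ⟨rfl, hi⟩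
    | succ n ih =>
      intro hn
      obtain ⟨a, b⟩ := ih (by omega)
      rcases (hstep (i + n)).2 with h | h
      · exact ⟨h.2.1.trans a, by rw [← Nat.add_assoc, h.2.2, b]; rfl⟩
      · exact absurd h.1 (n3 i _ (by omega) (by omega))
  have hend : ∀ i, (σ i).cur = idProf Q →
      prof F R i (nx i - i) = (σ i).goal ∧ (σ (nx i)).goal = (σ 0).later := by
    intro i hi
    have hlt := n1 i
    obtain ⟨n, hn⟩ : ∃ n, nx i = i + n + 1 := ⟨nx i - i - 1, by omega⟩
    obtain ⟨a, b⟩ := hseg i hi n (by omega)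
    have hc := n2 i
    rw [hn] at hc
    rcases (hstep (i + n)).2 with h | h
    · exact absurd hc h.1
    · have e : nx i - i = n + 1 := by omega
      rw [e, hn, h.2.2.1, hlater]
      refine ⟨?_, rfl⟩
      rw [← a, h.2.1, b]
      rfl
  let ι : ℕ → ℕ := fun j => nx^[j] 0
  have hιs : ∀ j, ι (j + 1) = nx (ι j) := fun j => Function.iterate_succ_apply' _ _ _
  have hι : StrictMono ι := strictMono_nat_of_lt_succ fun j => by rw [hιs]; exact n1 _
  have hid : ∀ j, (σ (ι j)).cur = idProf Q := by
    intro j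
    cases j with
    | zero => exact hcur0
    | succ j => rw [hιs]; exact hcut' _ (n2 _)
  have hprof : (fun j => prof F R (ι j) (ι (j + 1) - ι j)) =
      target (σ 0).goal (σ 0).later := by
    funext j
    rw [hιs, (hend _ (hid j)).1]
    cases j with
    | zero => rfl
    | succ j => rw [hιs, (hend _ (hid j)).2]; rfl
  rw [exists_acc_iff hι rfl, hprof]
  exact hbad

theorem compl_run_complete {Q : Type} [Finite Q] {I : Q → Prop} {R : ℕ → Q → Q → Prop}
    {F : Q → Prop} (h : ¬ ∃ ρ, Acc I R F ρ) :
    ∃ σ, Acc (cInit I) (fun i => cStep F (R i)) CState.cut σ := by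
  obtain ⟨ι, τ, hι, h0, hτ⟩ := exists_homogeneous_cuts fun i j => prof F R i (j - i)
  have hprof : (fun j => prof F R (ι j) (ι (j + 1) - ι j)) =
      target (prof F R (ι 0) (ι 1 - ι 0)) τ := by
    funext j
    cases j with
    | zero => rfl
    | succ j => exact hτ j
  have hbad := h
  rw [exists_acc_iff hι h0, hprof] at hbad
  obtain ⟨k, hk0, hkι, hk, hstep⟩ := exists_index hι h0
  set g := prof F R (ι 0) (ι 1 - ι 0)
  refine ⟨fun i => ⟨target g τ (k i), τ, prof F R (ι (k i)) (i - ι (k i)), i = ι (k i) ∧ k i ≠ 0⟩,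
    ⟨?_, ?_⟩, fun i => ⟨rfl, ?_⟩, fun n => ?_⟩
  · simpa only [hk0, target] using hbad
  · simp only [hk0, h0]
    rfl
  · obtain ⟨a, -⟩ := hk i
    have hsub : i + 1 - ι (k i) = (i - ι (k i)) + 1 := by omega
    have hadd : ι (k i) + (i - ι (k i)) = i := by omega
    have hext : prof F R (ι (k i)) (i + 1 - ι (k i)) =
        extProf F (prof F R (ι (k i)) (i - ι (k i))) (R i) := by
      rw [hsub, prof, hadd]
    rcases hstep i with ⟨h1, h2⟩ | ⟨h1, h2⟩
    · left
      simp only [h2]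
      exact ⟨fun hc => by omega, trivial, hext⟩
    · right
      simp only [h2]
      refine ⟨⟨h1, by omega⟩, ?_, rfl, ?_⟩
      · rw [← hext, h1]
        exact (congrFun hprof (k i)).symm
      · rw [← h1, Nat.sub_self]
        rfl
  · refine ⟨ι (n + 1), ?_, ?_⟩
    · have := hι.le_apply (x := n + 1)
      omega
    · simp [hkι]

theorem RelRecognizable.compl {A : Type u} {L : Set (ℕ → A)} (h : RelRecognizable A L) :
    RelRecognizable A {α | α ∉ L} := by
  obtain ⟨S, hS, I, T, F, hL⟩ := h
  refine ⟨CState S, inferInstance, cInit I, fun a b => cStep F (T a b), CState.cut, fun α => ?_⟩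
  rw [Set.mem_ofPred_eq, hL]
  exact ⟨compl_run_complete, fun ⟨_, hσ⟩ => compl_run_sound hσ⟩

end StrongBuchi

/-- ω-languages recognized by strong set-labeled Büchi automata are
closed under union and complement. -/
theorem strongBuchiRecognizable_union_compl {A : Type u} (L₁ L₂ : Set (ℕ → A))
    (h₁ : StrongBuchiRecognizable A L₁) (h₂ : StrongBuchiRecognizable A L₂) :
    StrongBuchiRecognizable A (L₁ ∪ L₂) ∧
      StrongBuchiRecognizable A {α : ℕ → A | α ∉ L₁} :=
  ⟨StrongBuchi.of_relRecognizable
      ((StrongBuchi.relRecognizable_of h₁).union (StrongBuchi.relRecognizable_of h₂)),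
    StrongBuchi.of_relRecognizable (StrongBuchi.relRecognizable_of h₁).compl⟩
end
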